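/- arXiv:1904.10668 — 2 statements merged into one kernel-verified Lean document; each statement's English description precedes it below -/
import Mathlib

section
/- (Formal invertibility of asymptotic charts.) There exist an open neighborhood V of the closure of B and a family of smooth maps F_ℏ : V → ℝⁿ (ℏ ∈ 𝓘) admitting an asymptotic expansion F_ℏ ∼ F₀ + ℏF₁ + ℏ²F₂ + ⋯ in the C∞(V) topology, with F₀ = G₀⁻¹ on V, such that: for every compact K ⊂ G₀⁻¹(V) there is ℏ₀ > 0 with G_ℏ(K) ⊂ V for all ℏ ∈ 𝓘 ∩ (0,ℏ₀] and sup_K ‖F_ℏ∘G_ℏ − Id‖ = O(ℏ^∞); and for every compact K′ ⊂ V ∩ G₀(U) there is ℏ₀′ > 0 with F_ℏ(K′) ⊂ U for all ℏ ∈ 𝓘 ∩ (0,ℏ₀′] and sup_{K′} ‖G_ℏ∘F_ℏ − Id‖ = O(ℏ^∞). -/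
open Set Metric

noncomputable section

/-- Euclidean space `ℝⁿ`. -/
abbrev Eucl (n : ℕ) : Type := EuclideanSpace ℝ (Fin n)

/-- The family `Gh ℏ` admits the asymptotic expansion `∑_j ℏ^j • Gc j` in the
`C^∞(U)` topology, uniformly for `ℏ ∈ I`. -/
def HasCinftyExpansion {n m : ℕ} (I : Set ℝ) (U : Set (Eucl n))
    (Gh : ℝ → Eucl n → Eucl m) (Gc : ℕ → Eucl n → Eucl m) : Prop :=
  (∀ h ∈ I, ContDiffOn ℝ (⊤ : ℕ∞) (Gh h) U) ∧
  (∀ j : ℕ, ContDiffOn ℝ (⊤ : ℕ∞) (Gc j) U) ∧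
  ∀ (N : ℕ) (K : Set (Eucl n)), K ⊆ U → IsCompact K → ∀ d : ℕ,
    ∃ C > 0, ∀ h ∈ I, ∀ x ∈ K,
      ‖iteratedFDerivWithin ℝ d
        (fun y => Gh h y - ∑ j ∈ Finset.range (N + 1), h ^ j • Gc j y) U x‖
        ≤ C * h ^ (N + 1)

/-- `G0` is a smooth diffeomorphism from `U` onto an open set containing the
closure of `B`. -/
structure IsDiffeoOntoNbhd {n : ℕ} (G0 : Eucl n → Eucl n) (U B : Set (Eucl n)) : Prop where
  contDiffOn : ContDiffOn ℝ (⊤ : ℕ∞) G0 U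
  injOn : InjOn G0 U
  isOpen_image : IsOpen (G0 '' U)
  closure_subset_image : closure B ⊆ G0 '' U
  smooth_inv : ∃ F0 : Eucl n → Eucl n, ContDiffOn ℝ (⊤ : ℕ∞) F0 (G0 '' U) ∧
      ∀ x ∈ U, F0 (G0 x) = x

open Filter Topology Asymptotics
open scoped ContDiff Nat

/-- Pointwise-local estimates uniformise over compact sets. -/
theorem exists_forall_le_of_isBigO_pow {E F : Type*} [NormedAddCommGroup E]
    [NormedAddCommGroup F] {I : Set ℝ} (hI : I ⊆ Ioi 0) {K : Set E} (hK : IsCompact K)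
    {P : ℝ × E → Prop} {f : ℝ × E → F}
    (hP : ∀ y ∈ K, ∀ᶠ p in 𝓝[I] 0 ×ˢ 𝓝 y, P p)
    (hf : ∀ y ∈ K, ∀ N : ℕ, f =O[𝓝[I] 0 ×ˢ 𝓝 y] fun p => p.1 ^ N) :
    ∃ h₀ > 0, (∀ h ∈ I, h ≤ h₀ → ∀ y ∈ K, P (h, y)) ∧
      ∀ N : ℕ, ∃ C > 0, ∀ h ∈ I, h ≤ h₀ → ∀ y ∈ K, ‖f (h, y)‖ ≤ C * h ^ N := by
  have unif : ∀ Q : ℝ × E → Prop, (∀ y ∈ K, ∀ᶠ p in 𝓝[I] 0 ×ˢ 𝓝 y, Q p) →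
      ∃ δ > 0, ∀ h ∈ I, h ≤ δ → ∀ y ∈ K, Q (h, y) := by
    intro Q hQ
    have h1 : ∀ᶠ h in 𝓝[I] 0, ∀ y ∈ K, Q (h, y) := by
      obtain ⟨s, hs, t, ht, hst⟩ := mem_prod_iff.1 (hK.mem_prod_nhdsSet_of_forall hQ)
      filter_upwards [hs] with h hh y hy
      exact hst ⟨hh, subset_of_mem_nhdsSet ht hy⟩
    obtain ⟨ε, hε, hεQ⟩ := Metric.mem_nhdsWithin_iff.1 h1
    refine ⟨ε / 2, by positivity, fun h hh hle => hεQ ⟨?_, hh⟩⟩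
    have : 0 < h := hI hh
    rw [Metric.mem_ball, dist_zero_right, Real.norm_of_nonneg this.le]
    linarith
  have bound : ∀ N : ℕ, ∃ δ > 0, ∀ h ∈ I, h ≤ δ → ∀ y ∈ K, ‖f (h, y)‖ ≤ h ^ N := by
    intro N
    refine unif (fun p => ‖f p‖ ≤ p.1 ^ N) fun y hy => ?_
    have hfst : Tendsto (fun p : ℝ × E => p.1) (𝓝[I] 0 ×ˢ 𝓝 y) (𝓝[I] 0) := tendsto_fst
    have hlo : (fun p : ℝ × E => p.1 ^ (N + 1)) =o[𝓝[I] 0 ×ˢ 𝓝 y] fun p => p.1 ^ N :=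
      ((isLittleO_pow_pow (Nat.lt_succ_self N)).mono nhdsWithin_le_nhds).comp_tendsto hfst
    filter_upwards [((hf y hy (N + 1)).trans_isLittleO hlo).bound zero_lt_one,
      hfst self_mem_nhdsWithin] with p hp hpI
    have : 0 < p.1 := hI hpI
    rwa [one_mul, Real.norm_of_nonneg (by positivity)] at hp
  obtain ⟨δ, hδ, hPδ⟩ := unif P hP
  obtain ⟨δ₀, hδ₀, hb₀⟩ := bound 0
  refine ⟨min δ δ₀, lt_min hδ hδ₀, fun h hh hle => hPδ h hh (hle.trans (min_le_left _ _)),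
    fun N => ?_⟩
  obtain ⟨δ', hδ', hb⟩ := bound N
  refine ⟨max 1 (1 / δ' ^ N), lt_max_of_lt_left one_pos, fun h hh hle y hy => ?_⟩
  have hpos : 0 < h := hI hh
  rcases le_total h δ' with hle' | hle'
  · exact (hb h hh hle' y hy).trans (le_mul_of_one_le_left (by positivity) (le_max_left _ _))
  · calc ‖f (h, y)‖ ≤ h ^ 0 := hb₀ h hh (hle.trans (min_le_right _ _)) y hy
      _ = 1 / δ' ^ N * δ' ^ N := by field_simp
      _ ≤ max 1 (1 / δ' ^ N) * h ^ N := by gcongr; exact le_max_right _ _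

section TaylorCoeff

variable {E F : Type*} [NormedAddCommGroup E] [NormedSpace ℝ E]
  [NormedAddCommGroup F] [NormedSpace ℝ F]

/-- The `j`-th Taylor coefficient at `0` of `f` in its first variable. -/
def fstTaylorCoeff (f : ℝ × E → F) (j : ℕ) (y : E) : F :=
  (j ! : ℝ)⁻¹ • iteratedFDeriv ℝ j f (0, y) (fun _ => (1, 0))

theorem contDiffAt_fstTaylorCoeff {f : ℝ × E → F} {y : E} (hf : ContDiffAt ℝ ∞ f (0, y)) (j : ℕ) :
    ContDiffAt ℝ ∞ (fstTaylorCoeff f j) y := by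
  have h1 : ContDiffAt ℝ ∞ (iteratedFDeriv ℝ j f) (0, y) :=
    hf.iteratedFDeriv_right (by exact_mod_cast le_top)
  have h2 : ContDiffAt ℝ ∞ (fun y : E => iteratedFDeriv ℝ j f (0, y)) y :=
    h1.comp y (contDiffAt_const.prodMk contDiffAt_id)
  exact ((ContinuousMultilinearMap.apply ℝ (fun _ : Fin j => ℝ × E) F
    (fun _ => (1, 0))).contDiff.contDiffAt.comp y h2).const_smul _

theorem fstTaylorCoeff_isBigO [CompleteSpace F] {f : ℝ × E → F} {y : E}
    (hf : ContDiffAt ℝ ∞ f (0, y)) (N : ℕ) :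
    (fun p : ℝ × E => f p - ∑ j ∈ Finset.range (N + 1), p.1 ^ j • fstTaylorCoeff f j p.2)
      =O[𝓝 (0, y)] fun p => p.1 ^ (N + 1) := by
  have hcd : ∀ᶠ p in 𝓝 ((0 : ℝ), y), ContDiffAt ℝ (N + 1) f p :=
    (hf.of_le (m := (N + 1 : ℕ)) (by exact_mod_cast le_top)).eventually (by simp)
  have hcont : ContinuousAt (fun p => ‖iteratedFDeriv ℝ (N + 1) f p‖) (0, y) :=
    (hf.iteratedFDeriv_right (m := 0) (by rw [zero_add]; exact_mod_cast le_top)).continuousAt.norm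
  set M := ‖iteratedFDeriv ℝ (N + 1) f (0, y)‖ + 1
  have hM : ∀ᶠ p in 𝓝 ((0 : ℝ), y), ‖iteratedFDeriv ℝ (N + 1) f p‖ < M :=
    hcont.eventually_lt continuousAt_const (lt_add_one _)
  obtain ⟨r, hr, hball⟩ := Metric.eventually_nhds_iff_ball.1 (hcd.and hM)
  refine IsBigO.of_bound ((N ! : ℝ)⁻¹ * M) ?_
  filter_upwards [Metric.ball_mem_nhds _ hr] with p hp
  obtain ⟨h, x⟩ := p
  have hseg : ∀ t ∈ Icc (0 : ℝ) 1, ((0 : ℝ), x) + t • (h, (0 : E)) ∈ ball ((0 : ℝ), y) r := by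
    intro t ht
    rw [Metric.mem_ball, Prod.dist_eq, max_lt_iff] at hp ⊢
    simp only [dist_zero_right, Real.norm_eq_abs] at hp
    refine ⟨?_, by simpa using hp.2⟩
    simp only [Prod.smul_mk, smul_zero, Prod.mk_add_mk, zero_add, smul_eq_mul, dist_zero_right,
      Real.norm_eq_abs, abs_mul, abs_of_nonneg ht.1]
    nlinarith [abs_nonneg h, ht.2, hp.1]
  have hpow : ∀ (k : ℕ) (q : ℝ × E), iteratedFDeriv ℝ k f q (fun _ => (h, (0 : E)))
      = h ^ k • iteratedFDeriv ℝ k f q (fun _ => ((1 : ℝ), (0 : E))) := by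
    intro k q
    have := (iteratedFDeriv ℝ k f q).map_smul_univ (fun _ => h) (fun _ => ((1 : ℝ), (0 : E)))
    simpa using this
  have htaylor := map_add_eq_sum_add_integral_iteratedFDeriv (n := N)
    (fun t ht => (hball _ (hseg t ht)).1)
  have hsplit : ((0 : ℝ), x) + (h, (0 : E)) = (h, x) := by simp
  rw [hsplit] at htaylor
  have hsum : ∑ k ∈ Finset.range (N + 1),
      (k ! : ℝ)⁻¹ • iteratedFDeriv ℝ k f (0, x) (fun _ => (h, (0 : E)))
      = ∑ j ∈ Finset.range (N + 1), h ^ j • fstTaylorCoeff f j x := by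
    refine Finset.sum_congr rfl fun k _ => ?_
    rw [hpow, fstTaylorCoeff, smul_comm]
  rw [htaylor, hsum, add_sub_cancel_left, norm_smul, Real.norm_of_nonneg (by positivity), mul_assoc]
  gcongr
  refine (intervalIntegral.norm_integral_le_of_norm_le_const
    (C := M * ‖h ^ (N + 1)‖) fun t ht => ?_).trans (by simp)
  rw [uIoc_of_le zero_le_one] at ht
  rw [hpow, norm_smul, norm_smul]
  have h1 : ‖(1 - t) ^ N‖ ≤ 1 := by
    rw [norm_pow, Real.norm_of_nonneg (by linarith [ht.2])]
    exact pow_le_one₀ (by linarith [ht.2]) (by linarith [ht.1])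
  have h2 : ‖iteratedFDeriv ℝ (N + 1) f ((0, x) + t • (h, (0 : E))) (fun _ => ((1 : ℝ), (0 : E)))‖
      ≤ M := by
    refine ((iteratedFDeriv ℝ (N + 1) f _).le_opNorm _).trans ?_
    simpa [Prod.norm_def] using (hball _ (hseg t ⟨ht.1.le, ht.2⟩)).2.le
  calc _ ≤ 1 * (‖h ^ (N + 1)‖ * M) := by gcongr
    _ = _ := by ring

theorem eq_zero_of_sum_pow_smul_isBigO {m : ℕ} {a : ℕ → F}
    (h : (fun t : ℝ => ∑ j ∈ Finset.range m, t ^ j • a j) =O[𝓝[≠] 0] fun t => t ^ m) :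
    ∀ j < m, a j = 0 := by
  induction m generalizing a with
  | zero => simp
  | succ m ih =>
    have hcont : Continuous fun t : ℝ => ∑ j ∈ Finset.range (m + 1), t ^ j • a j := by fun_prop
    have hlim : Tendsto (fun t : ℝ => t ^ (m + 1)) (𝓝[≠] 0) (𝓝 0) :=
      ((continuous_pow (m + 1)).tendsto' 0 0 (by simp)).mono_left nhdsWithin_le_nhds
    have h0 : a 0 = 0 := by
      refine tendsto_nhds_unique ((hcont.tendsto' 0 (a 0) ?_).mono_left nhdsWithin_le_nhds)
        (h.trans_tendsto hlim)
      simp [Finset.sum_range_succ']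
    have h1 : (fun t : ℝ => ∑ j ∈ Finset.range m, t ^ j • a (j + 1)) =O[𝓝[≠] 0]
        fun t => t ^ m := by
      obtain ⟨C, hC⟩ := h.bound
      refine IsBigO.of_bound C ?_
      filter_upwards [hC, self_mem_nhdsWithin] with t ht ht0
      have ht0' : 0 < ‖t‖ := norm_pos_iff.2 ht0
      rw [Finset.sum_range_succ', h0, smul_zero, add_zero] at ht
      simp only [pow_succ', mul_smul, ← Finset.smul_sum, norm_smul, norm_mul] at ht
      refine le_of_mul_le_mul_left ?_ ht0'
      linarith
    rintro (_ | j) hj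
    · exact h0
    · exact ih h1 j (by omega)

theorem fstTaylorCoeff_eq_of_isBigO [CompleteSpace F] {f g : ℝ × E → F} {y : E}
    (hf : ContDiffAt ℝ ∞ f (0, y)) (hg : ContDiffAt ℝ ∞ g (0, y)) {m : ℕ}
    (h : (fun p => f p - g p) =O[𝓝 (0, y)] fun p => p.1 ^ m) {j : ℕ} (hj : j < m) :
    fstTaylorCoeff f j y = fstTaylorCoeff g j y := by
  obtain ⟨N, rfl⟩ : ∃ N, m = N + 1 := ⟨m - 1, by omega⟩
  have hlim : Tendsto (fun t : ℝ => (t, y)) (𝓝[≠] 0) (𝓝 (0, y)) :=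
    ((continuous_id.prodMk continuous_const).tendsto' 0 (0, y) rfl).mono_left nhdsWithin_le_nhds
  have key := (((fstTaylorCoeff_isBigO hg N).sub (fstTaylorCoeff_isBigO hf N)).add h).comp_tendsto
    hlim
  refine sub_eq_zero.1 (eq_zero_of_sum_pow_smul_isBigO
    (a := fun j => fstTaylorCoeff f j y - fstTaylorCoeff g j y) ?_ j hj)
  refine key.congr_left fun t => ?_
  simp only [Function.comp_apply, smul_sub, Finset.sum_sub_distrib]
  abel

theorem ContDiffAt.isBigO_sub_comp {α : Type*} {l : Filter α} {f : E → F} {x : E}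
    (hf : ContDiffAt ℝ ∞ f x) {u v : α → E} (hu : Tendsto u l (𝓝 x)) (hv : Tendsto v l (𝓝 x)) :
    (fun a => f (u a) - f (v a)) =O[l] fun a => u a - v a :=
  (hf.hasStrictFDerivAt (by simp)).isBigO_sub.comp_tendsto (hu.prodMk_nhds hv)

theorem ContDiffAt.isBigO_sub_comp_snd {α : Type*} {l : Filter α} {f : ℝ × E → F} {x : E}
    (hf : ContDiffAt ℝ ∞ f (0, x)) {t : α → ℝ} {u v : α → E} (ht : Tendsto t l (𝓝 0))
    (hu : Tendsto u l (𝓝 x)) (hv : Tendsto v l (𝓝 x)) :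
    (fun a => f (t a, u a) - f (t a, v a)) =O[l] fun a => u a - v a := by
  refine (hf.isBigO_sub_comp (ht.prodMk_nhds hu) (ht.prodMk_nhds hv)).trans
    (IsBigO.of_bound 1 (Eventually.of_forall fun a => ?_))
  simp [Prod.norm_def]

end TaylorCoeff

theorem exists_compact_exhaustion_of_isOpen {n : ℕ} {V : Set (Eucl n)} (hV : IsOpen V) :
    ∃ K : ℕ → Set (Eucl n), (∀ m, IsCompact (K m)) ∧ (∀ m, K m ⊆ V) ∧ Monotone K ∧
      ∀ L ⊆ V, IsCompact L → ∃ m, L ⊆ K m := by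
  have : LocallyCompactSpace V := hV.locallyCompactSpace
  let e : CompactExhaustion V := default
  refine ⟨fun m => (↑) '' e m, fun m => (e.isCompact m).image continuous_subtype_val,
    fun m => Subtype.coe_image_subset _ _, fun a b hab => image_mono (e.subset hab), ?_⟩
  intro L hLV hL
  have hpre : IsCompact ((↑) ⁻¹' L : Set V) :=
    Topology.IsInducing.subtypeVal.isCompact_preimage' hL (by simpa using hLV)
  obtain ⟨m, hm⟩ := e.exists_superset_of_isCompact hpre
  exact ⟨m, fun x hx => ⟨⟨x, hLV hx⟩, hm hx, rfl⟩⟩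

/-- The coefficient of `Fc j` in the difference between a Borel sum, in which the `j`-th term is
kept when `h ≤ ε`, and the partial sum of order `N`. -/
theorem abs_truncated_pow_sub_le {h ε : ℝ} (hh : 0 < h) (hε : 0 < ε) (hε1 : ε ≤ 1) (j N : ℕ) :
    |(if h ≤ ε then h ^ j else 0) - (if j < N + 1 then h ^ j else 0)|
      ≤ (1 + (1 / ε) ^ (N + 1)) * h ^ (N + 1) := by
  have hnn : 0 ≤ (1 + (1 / ε) ^ (N + 1)) * h ^ (N + 1) := by positivity
  split_ifs with h1 h2 h2
  · simpa using hnn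
  · rw [sub_zero, abs_of_pos (by positivity)]
    calc h ^ j ≤ h ^ (N + 1) := pow_le_pow_of_le_one hh.le (h1.trans hε1) (by omega)
      _ ≤ _ := le_mul_of_one_le_left (by positivity) (by simp; positivity)
  · rw [zero_sub, abs_neg, abs_of_pos (by positivity)]
    obtain ⟨k, hk⟩ := Nat.exists_eq_add_of_lt h2
    have e1 : h ^ (N + 1) = h ^ j * h ^ (k + 1) := by rw [← pow_add]; congr 1
    have e2 : 1 ≤ (1 / ε) ^ (N + 1) * h ^ (k + 1) := by
      calc (1 : ℝ) = (1 / ε) ^ (k + 1) * ε ^ (k + 1) := by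
            rw [← mul_pow, one_div_mul_cancel hε.ne', one_pow]
        _ ≤ (1 / ε) ^ (N + 1) * h ^ (k + 1) := by
            gcongr
            · exact (one_le_div hε).2 hε1
            · omega
            · exact (not_le.1 h1).le
    calc h ^ j = h ^ j * 1 := (mul_one _).symm
      _ ≤ h ^ j * ((1 / ε) ^ (N + 1) * h ^ (k + 1)) := by gcongr
      _ = (1 / ε) ^ (N + 1) * h ^ (N + 1) := by rw [e1]; ring
      _ ≤ _ := by gcongr; simp
  · simpa using hnn

/-- **Borel summation**: every sequence of smooth coefficients is the asymptotic expansion of some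
family. -/
theorem exists_hasCinftyExpansion {n m : ℕ} {I : Set ℝ} (hI : I ⊆ Ioi 0) {V : Set (Eucl n)}
    (hV : IsOpen V) {Fc : ℕ → Eucl n → Eucl m}
    (hFc : ∀ j, ContDiffOn ℝ (⊤ : ℕ∞) (Fc j) V) :
    ∃ Fh : ℝ → Eucl n → Eucl m, HasCinftyExpansion I V Fh Fc := by
  obtain ⟨K, hK, hKV, hKmono, hKex⟩ := exists_compact_exhaustion_of_isOpen hV
  have hbd : ∀ j d k : ℕ, ∃ A : ℝ, 0 ≤ A ∧
      ∀ x ∈ K k, ‖iteratedFDerivWithin ℝ d (Fc j) V x‖ ≤ A := by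
    intro j d k
    have hc : ContinuousOn (iteratedFDerivWithin ℝ d (Fc j) V) (K k) :=
      ((hFc j).continuousOn_iteratedFDerivWithin (by exact_mod_cast le_top)
        hV.uniqueDiffOn).mono (hKV k)
    obtain ⟨A, hA⟩ := (hK k).exists_bound_of_continuousOn hc
    exact ⟨max A 0, le_max_right _ _, fun x hx => (hA x hx).trans (le_max_left _ _)⟩
  choose A hA0 hA using hbd
  let B : ℕ → ℝ := fun j => 1 + ∑ d ∈ Finset.range (j + 1), A j d j
  have hB1 : ∀ j, 1 ≤ B j := fun j =>
    le_add_of_nonneg_right (Finset.sum_nonneg fun d _ => hA0 _ _ _)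
  have hAB : ∀ j d k, d ≤ j → k ≤ j → ∀ x ∈ K k,
      ‖iteratedFDerivWithin ℝ d (Fc j) V x‖ ≤ B j := by
    intro j d k hd hk x hx
    have h1 := hA j d j x (hKmono hk hx)
    have h2 : A j d j ≤ ∑ d ∈ Finset.range (j + 1), A j d j :=
      Finset.single_le_sum (f := fun d => A j d j) (fun d _ => hA0 _ _ _)
        (Finset.mem_range.2 (by omega))
    simp only [B]
    linarith
  let ε : ℕ → ℝ := fun j => (1 / 2) ^ j / B j
  have hε0 : ∀ j, 0 < ε j := fun j => div_pos (by positivity) (by linarith [hB1 j])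
  have hεle : ∀ j, ε j ≤ (1 / 2) ^ j := fun j => div_le_self (by positivity) (hB1 j)
  have hε1 : ∀ j, ε j ≤ 1 := fun j =>
    (hεle j).trans (pow_le_one₀ (by norm_num) (by norm_num))
  have hM : ∀ h : ℝ, ∃ M : ℕ, 0 < h → ∀ j ≥ M, ε j < h := by
    intro h
    by_cases hh : 0 < h
    · obtain ⟨M, hM⟩ := exists_pow_lt_of_lt_one hh (by norm_num : (1 / 2 : ℝ) < 1)
      exact ⟨M, fun _ j hj => ((hεle j).trans
        (pow_le_pow_of_le_one (by norm_num) (by norm_num) hj)).trans_lt hM⟩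
    · exact ⟨0, fun h0 => absurd h0 hh⟩
  choose M hM using hM
  let c : ℝ → ℕ → ℝ := fun h j => if h ≤ ε j then h ^ j else 0
  refine ⟨fun h y => ∑ j ∈ Finset.range (M h), c h j • Fc j y, fun h _ => ?_, hFc, ?_⟩
  · exact ContDiffOn.sum fun j _ => (hFc j).const_smul (c h j)
  intro N L hLV hL d
  obtain ⟨k, hk⟩ := hKex L hLV hL
  set J := max (N + 2) (max d k)
  let a : ℕ → ℝ := fun j =>
    if j < J then (1 + (1 / ε j) ^ (N + 1)) * A j d k else (1 / 2) ^ j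
  have ha0 : ∀ j, 0 ≤ a j := by
    intro j
    have := hA0 j d k
    have := hε0 j
    simp only [a]
    split_ifs <;> positivity
  have ha : Summable a := by
    refine (summable_nat_add_iff J).1 ?_
    simp only [a, not_lt.2 (Nat.le_add_left J _), if_false]
    exact (summable_nat_add_iff J).2 (summable_geometric_of_lt_one (by norm_num) (by norm_num))
  let w : ℝ → ℕ → ℝ := fun h j => c h j - if j < N + 1 then h ^ j else 0
  have hterm : ∀ h ∈ I, ∀ x ∈ L, ∀ j,
      |w h j| * ‖iteratedFDerivWithin ℝ d (Fc j) V x‖ ≤ a j * h ^ (N + 1) := by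
    intro h hh x hx j
    have hpos : 0 < h := hI hh
    by_cases hj : j < J
    · simp only [a, if_pos hj]
      calc _ ≤ ((1 + (1 / ε j) ^ (N + 1)) * h ^ (N + 1)) * A j d k := by
            gcongr
            · have := hε0 j
              positivity
            · exact abs_truncated_pow_sub_le hpos (hε0 j) (hε1 j) j N
            · exact hA j d k x (hk hx)
        _ = _ := by ring
    · have hjJ : J ≤ j := not_lt.1 hj
      have hjN : N + 2 ≤ j := (le_max_left _ _).trans hjJ
      have hjd : d ≤ j := ((le_max_left _ _).trans (le_max_right _ _)).trans hjJ
      have hjk : k ≤ j := ((le_max_right _ _).trans (le_max_right _ _)).trans hjJ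
      simp only [a, if_neg hj, w, c, if_neg (by omega : ¬ j < N + 1), sub_zero]
      split_ifs with hle
      · rw [abs_of_pos (by positivity)]
        have hBpos : 0 < B j := by linarith [hB1 j]
        calc h ^ j * _ ≤ h ^ (N + 2) * B j := by
              gcongr ?_ * ?_
              · exact pow_le_pow_of_le_one hpos.le (hle.trans (hε1 j)) hjN
              · exact hAB j d k hjd hjk x (hk hx)
          _ = h ^ (N + 1) * h * B j := by ring
          _ ≤ h ^ (N + 1) * ε j * B j := by gcongr
          _ = (1 / 2) ^ j * h ^ (N + 1) := by simp only [ε]; field_simp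
      · simpa using by positivity
  refine ⟨∑' j, a j + 1, add_pos_of_nonneg_of_pos (tsum_nonneg ha0) one_pos, fun h hh x hx => ?_⟩
  have hpos : 0 < h := hI hh
  set R := max (M h) (N + 1)
  have hfun : (fun y => ∑ j ∈ Finset.range (M h), c h j • Fc j y
      - ∑ j ∈ Finset.range (N + 1), h ^ j • Fc j y)
      = ∑ j ∈ Finset.range R, (w h j • Fc j) := by
    funext y
    have e1 : ∑ j ∈ Finset.range (M h), c h j • Fc j y
        = ∑ j ∈ Finset.range R, c h j • Fc j y := by
      refine Finset.sum_subset (Finset.range_subset_range.2 (le_max_left _ _)) fun j _ hj => ?_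
      have : ¬ h ≤ ε j := not_le.2 (hM h hpos j (by simpa using hj))
      simp [c, this]
    have e2 : ∑ j ∈ Finset.range (N + 1), h ^ j • Fc j y
        = ∑ j ∈ Finset.range R, (if j < N + 1 then h ^ j else 0) • Fc j y := by
      rw [← Finset.sum_subset (Finset.range_subset_range.2 (le_max_right (M h) (N + 1)))]
      · refine Finset.sum_congr rfl fun j hj => ?_
        rw [if_pos (Finset.mem_range.1 hj)]
      · intro j _ hj
        rw [if_neg (by simpa using hj), zero_smul]
    simp only [e1, e2, ← Finset.sum_sub_distrib, ← sub_smul, Finset.sum_apply, Pi.smul_apply, w]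
  have hcd : ∀ j, ContDiffWithinAt ℝ d (Fc j) V x := fun j =>
    (hFc j x (hLV hx)).of_le (by exact_mod_cast le_top)
  rw [hfun, iteratedFDerivWithin_sum_apply (f := fun j => w h j • Fc j) hV.uniqueDiffOn (hLV hx)
    fun j _ => (hcd j).const_smul (w h j)]
  calc _ ≤ ∑ j ∈ Finset.range R, ‖iteratedFDerivWithin ℝ d (w h j • Fc j) V x‖ :=
        norm_sum_le _ _
    _ ≤ ∑ j ∈ Finset.range R, a j * h ^ (N + 1) := by
        refine Finset.sum_le_sum fun j _ => ?_
        rw [iteratedFDerivWithin_const_smul_apply (hcd j) hV.uniqueDiffOn (hLV hx), norm_smul,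
          Real.norm_eq_abs]
        exact hterm h hh x hx j
    _ = (∑ j ∈ Finset.range R, a j) * h ^ (N + 1) := (Finset.sum_mul _ _ _).symm
    _ ≤ (∑' j, a j + 1) * h ^ (N + 1) := by
        gcongr
        linarith [ha.sum_le_tsum (Finset.range R) fun j _ => ha0 j]

section ApproxInverse

variable {E : Type*} [NormedAddCommGroup E] [NormedSpace ℝ E]

/-- The quotient by `h` of the part of positive degree of the `k`-th partial sum of
`∑_j h ^ j • Gc j x`. -/
def higherPart (Gc : ℕ → E → E) (k : ℕ) (p : ℝ × E) : E :=
  ∑ j ∈ Finset.range k, p.1 ^ j • Gc (j + 1) p.2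

theorem sum_pow_smul_eq_add_higherPart (Gc : ℕ → E → E) (k : ℕ) (p : ℝ × E) :
    ∑ j ∈ Finset.range (k + 1), p.1 ^ j • Gc j p.2 = Gc 0 p.2 + p.1 • higherPart Gc k p := by
  simp [higherPart, Finset.sum_range_succ', Finset.smul_sum, smul_smul, pow_succ', add_comm]

theorem contDiffAt_higherPart {Gc : ℕ → E → E} {x : E} (hG : ∀ j, ContDiffAt ℝ ∞ (Gc j) x)
    (k : ℕ) (t : ℝ) : ContDiffAt ℝ ∞ (higherPart Gc k) (t, x) := by
  refine ContDiffAt.sum fun j _ => ?_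
  exact (contDiffAt_fst.pow j).smul ((hG (j + 1)).comp (t, x) contDiffAt_snd)

/-- Successive approximations to the inverse of `x ↦ ∑_j h ^ j • Gc j x`, where `F0` is an inverse
of `Gc 0`: iterate `x ↦ F0 (y - ∑_{1 ≤ j} h ^ j • Gc j x)`. -/
def approxInverse (Gc : ℕ → E → E) (F0 : E → E) : ℕ → ℝ × E → E
  | 0, p => F0 p.2
  | k + 1, p => F0 (p.2 - p.1 • higherPart Gc (k + 1) (p.1, approxInverse Gc F0 k p))

/-- `F0` is a smooth inverse of `Gc 0` near `y`, and all `Gc j` are smooth near `F0 y`. -/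
structure IsSmoothInverseAt (Gc : ℕ → E → E) (F0 : E → E) (y : E) : Prop where
  contDiffAt : ∀ j, ContDiffAt ℝ ∞ (Gc j) (F0 y)
  contDiffAt_inv : ContDiffAt ℝ ∞ F0 y
  right_inv : ∀ᶠ z in 𝓝 y, Gc 0 (F0 z) = z
  left_inv : ∀ᶠ x in 𝓝 (F0 y), F0 (Gc 0 x) = x

variable {Gc : ℕ → E → E} {F0 : E → E} {y : E}

theorem approxInverse_zero_left (k : ℕ) (y : E) : approxInverse Gc F0 k (0, y) = F0 y := by
  cases k <;> simp [approxInverse]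

namespace IsSmoothInverseAt

theorem contDiffAt_approxInverse (H : IsSmoothInverseAt Gc F0 y) (k : ℕ) :
    ContDiffAt ℝ ∞ (approxInverse Gc F0 k) (0, y) := by
  induction k with
  | zero => exact H.contDiffAt_inv.comp ((0 : ℝ), y) contDiffAt_snd
  | succ k ih =>
    have h1 : ContDiffAt ℝ ∞ (fun p => higherPart Gc (k + 1) (p.1, approxInverse Gc F0 k p))
        ((0 : ℝ), y) := by
      refine ContDiffAt.comp (g := higherPart Gc (k + 1)) ((0 : ℝ), y) ?_
        (contDiffAt_fst.prodMk ih)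
      rw [approxInverse_zero_left]
      exact contDiffAt_higherPart H.contDiffAt _ _
    refine ContDiffAt.comp (g := F0) ((0 : ℝ), y) ?_
      (contDiffAt_snd.sub (contDiffAt_fst.smul h1))
    simpa using H.contDiffAt_inv

theorem tendsto_approxInverse (H : IsSmoothInverseAt Gc F0 y) (k : ℕ) :
    Tendsto (approxInverse Gc F0 k) (𝓝 (0, y)) (𝓝 (F0 y)) := by
  simpa only [approxInverse_zero_left] using (H.contDiffAt_approxInverse k).continuousAt.tendsto

theorem tendsto_sub_higherPart (H : IsSmoothInverseAt Gc F0 y) (k m : ℕ) :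
    Tendsto (fun p : ℝ × E => p.2 - p.1 • higherPart Gc m (p.1, approxInverse Gc F0 k p))
      (𝓝 (0, y)) (𝓝 y) := by
  have h1 := (contDiffAt_higherPart H.contDiffAt m 0).continuousAt.tendsto.comp
    (continuousAt_fst.tendsto.prodMk_nhds (H.tendsto_approxInverse k))
  simpa using continuousAt_snd.tendsto.sub (continuousAt_fst.tendsto.smul h1)

theorem approxInverse_succ_sub_isBigO (H : IsSmoothInverseAt Gc F0 y) {k : ℕ}
    (h : (fun p : ℝ × E => Gc 0 (approxInverse Gc F0 k p)
      + p.1 • higherPart Gc k (p.1, approxInverse Gc F0 k p) - p.2)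
        =O[𝓝 (0, y)] fun p => p.1 ^ (k + 1)) :
    (fun p => approxInverse Gc F0 (k + 1) p - approxInverse Gc F0 k p)
      =O[𝓝 (0, y)] fun p => p.1 ^ (k + 1) := by
  have hΦ := H.tendsto_approxInverse k
  have hG0 : Gc 0 (F0 y) = y := H.right_inv.self_of_nhds
  have hGΦ : Tendsto (fun p => Gc 0 (approxInverse Gc F0 k p)) (𝓝 (0, y)) (𝓝 y) := by
    simpa only [hG0, Function.comp_def] using (H.contDiffAt 0).continuousAt.tendsto.comp hΦ
  have hlip := H.contDiffAt_inv.isBigO_sub_comp (H.tendsto_sub_higherPart k (k + 1)) hGΦ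
  have hbdd : (fun p => Gc (k + 1) (approxInverse Gc F0 k p)) =O[𝓝 (0, y)] fun _ => (1 : ℝ) :=
    ((H.contDiffAt (k + 1)).continuousAt.tendsto.comp hΦ).isBigO_one ℝ
  have hlast : (fun p : ℝ × E => p.1 ^ (k + 1) • Gc (k + 1) (approxInverse Gc F0 k p))
      =O[𝓝 (0, y)] fun p => p.1 ^ (k + 1) := by
    simpa using (isBigO_refl (fun p : ℝ × E => p.1 ^ (k + 1)) _).smul hbdd
  have hleft := hΦ.eventually H.left_inv
  refine (hlip.congr' ?_ EventuallyEq.rfl).trans ((h.add hlast).neg_left.congr_left fun p => ?_)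
  · filter_upwards [hleft] with p hp
    rw [hp, approxInverse]
  · simp only [higherPart, Finset.sum_range_succ, smul_add, smul_smul, pow_succ']
    abel

theorem approxInverse_isBigO (H : IsSmoothInverseAt Gc F0 y) (k : ℕ) :
    (fun p : ℝ × E => Gc 0 (approxInverse Gc F0 k p)
      + p.1 • higherPart Gc k (p.1, approxInverse Gc F0 k p) - p.2)
        =O[𝓝 (0, y)] fun p => p.1 ^ (k + 1) := by
  induction k with
  | zero =>
    have hsnd : Tendsto (fun p : ℝ × E => p.2) (𝓝 (0, y)) (𝓝 y) := continuousAt_snd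
    refine (isBigO_zero _ _).congr' ?_ EventuallyEq.rfl
    filter_upwards [hsnd.eventually H.right_inv] with p hp
    simp [approxInverse, higherPart, hp]
  | succ k ih =>
    have hlip := (contDiffAt_higherPart H.contDiffAt (k + 1) 0).isBigO_sub_comp_snd
      continuousAt_fst.tendsto (H.tendsto_approxInverse (k + 1)) (H.tendsto_approxInverse k)
    have hsmul := (isBigO_refl (fun p : ℝ × E => p.1) (𝓝 (0, y))).smul
      (hlip.trans (H.approxInverse_succ_sub_isBigO ih))
    refine hsmul.congr' ?_ (Eventually.of_forall fun p => (pow_succ' p.1 (k + 1)).symm)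
    filter_upwards [(H.tendsto_sub_higherPart k (k + 1)).eventually H.right_inv] with p hp
    have : Gc 0 (approxInverse Gc F0 (k + 1) p)
        = p.2 - p.1 • higherPart Gc (k + 1) (p.1, approxInverse Gc F0 k p) := by
      rw [approxInverse, hp]
    rw [this, smul_sub]
    abel

end IsSmoothInverseAt

/-- The coefficients of the formal inverse of `∑_j h ^ j • Gc j`. -/
def inverseCoeff (Gc : ℕ → E → E) (F0 : E → E) (j : ℕ) : E → E :=
  fstTaylorCoeff (approxInverse Gc F0 j) j

theorem inverseCoeff_zero (Gc : ℕ → E → E) (F0 : E → E) : inverseCoeff Gc F0 0 = F0 := by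
  ext1 y
  simp [inverseCoeff, fstTaylorCoeff, approxInverse]

namespace IsSmoothInverseAt

theorem fstTaylorCoeff_approxInverse [CompleteSpace E] (H : IsSmoothInverseAt Gc F0 y) {j N : ℕ}
    (hjN : j ≤ N) : fstTaylorCoeff (approxInverse Gc F0 N) j y = inverseCoeff Gc F0 j y := by
  induction N, hjN using Nat.le_induction with
  | base => rfl
  | succ N hN ih =>
    rw [← ih]
    exact fstTaylorCoeff_eq_of_isBigO (H.contDiffAt_approxInverse _) (H.contDiffAt_approxInverse _)
      (H.approxInverse_succ_sub_isBigO (H.approxInverse_isBigO N)) (by omega)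

theorem approxInverse_sub_sum_isBigO [CompleteSpace E] (H : IsSmoothInverseAt Gc F0 y)
    (H' : ∀ᶠ z in 𝓝 y, IsSmoothInverseAt Gc F0 z) (N : ℕ) :
    (fun p : ℝ × E => approxInverse Gc F0 N p
      - ∑ j ∈ Finset.range (N + 1), p.1 ^ j • inverseCoeff Gc F0 j p.2)
      =O[𝓝 (0, y)] fun p => p.1 ^ (N + 1) := by
  have hsnd : Tendsto (fun p : ℝ × E => p.2) (𝓝 (0, y)) (𝓝 y) := continuousAt_snd
  refine (fstTaylorCoeff_isBigO (H.contDiffAt_approxInverse N) N).congr' ?_ EventuallyEq.rfl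
  filter_upwards [hsnd.eventually H'] with p hp
  congr 1
  refine Finset.sum_congr rfl fun j hj => ?_
  rw [hp.fstTaylorCoeff_approxInverse (by simpa [Nat.lt_succ_iff] using hj)]

end IsSmoothInverseAt

end ApproxInverse

namespace HasCinftyExpansion

variable {n m : ℕ} {I : Set ℝ} {U : Set (Eucl n)} {Gh : ℝ → Eucl n → Eucl m}
  {Gc : ℕ → Eucl n → Eucl m} {x : Eucl n}

theorem isBigO (hG : HasCinftyExpansion I U Gh Gc) (hI : I ⊆ Ioi 0) (hU : IsOpen U) (hx : x ∈ U)
    (N : ℕ) :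
    (fun p : ℝ × Eucl n => Gh p.1 p.2 - ∑ j ∈ Finset.range (N + 1), p.1 ^ j • Gc j p.2)
      =O[𝓝[I] 0 ×ˢ 𝓝 x] fun p => p.1 ^ (N + 1) := by
  obtain ⟨r, hr, hrU⟩ := Metric.nhds_basis_closedBall.mem_iff.1 (hU.mem_nhds hx)
  obtain ⟨C, -, hC⟩ := hG.2.2 N (closedBall x r) hrU (isCompact_closedBall x r) 0
  refine IsBigO.of_bound C ?_
  filter_upwards [prod_mem_prod self_mem_nhdsWithin (closedBall_mem_nhds x hr)] with p hp
  have hpos : 0 < p.1 := hI hp.1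
  have := hC p.1 hp.1 p.2 hp.2
  rw [norm_iteratedFDerivWithin_zero] at this
  rwa [Real.norm_of_nonneg (by positivity)]

theorem isBigO_sub (hG : HasCinftyExpansion I U Gh Gc) (hI : I ⊆ Ioi 0) (hU : IsOpen U)
    (hx : x ∈ U) :
    (fun q : ℝ × Eucl n × Eucl n =>
      (Gh q.1 q.2.1 - Gc 0 q.2.1) - (Gh q.1 q.2.2 - Gc 0 q.2.2))
      =O[𝓝[I] 0 ×ˢ 𝓝 (x, x)] fun q => q.1 • (q.2.1 - q.2.2) := by
  obtain ⟨r, hr, hrU⟩ := Metric.nhds_basis_closedBall.mem_iff.1 (hU.mem_nhds hx)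
  obtain ⟨C, -, hC⟩ := hG.2.2 0 (closedBall x r) hrU (isCompact_closedBall x r) 1
  refine IsBigO.of_bound C ?_
  have hnhds : closedBall x r ×ˢ closedBall x r ∈ 𝓝 (x, x) :=
    prod_mem_nhds (closedBall_mem_nhds x hr) (closedBall_mem_nhds x hr)
  filter_upwards [prod_mem_prod self_mem_nhdsWithin hnhds] with q hq
  have hpos : 0 < q.1 := hI hq.1
  have hdiff : ∀ z ∈ closedBall x r, DifferentiableAt ℝ (fun y => Gh q.1 y - Gc 0 y) z := by
    intro z hz
    have hUz := hU.mem_nhds (hrU hz)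
    exact (((hG.1 q.1 hq.1).contDiffAt hUz).differentiableAt (by simp)).sub
      (((hG.2.1 0).contDiffAt hUz).differentiableAt (by simp))
  have hbound : ∀ z ∈ closedBall x r, ‖fderiv ℝ (fun y => Gh q.1 y - Gc 0 y) z‖ ≤ C * q.1 := by
    intro z hz
    have := hC q.1 hq.1 z hz
    rw [norm_iteratedFDerivWithin_one _ (hU.uniqueDiffWithinAt (hrU hz)),
      fderivWithin_of_isOpen hU (hrU hz)] at this
    simpa using this
  have := (convex_closedBall x r).norm_image_sub_le_of_norm_fderiv_le hdiff hbound hq.2.2 hq.2.1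
  rwa [norm_smul, Real.norm_of_nonneg hpos.le, ← mul_assoc]

theorem tendsto (hG : HasCinftyExpansion I U Gh Gc) (hI : I ⊆ Ioi 0) (hU : IsOpen U)
    (hx : x ∈ U) :
    Tendsto (fun p : ℝ × Eucl n => Gh p.1 p.2) (𝓝[I] 0 ×ˢ 𝓝 x) (𝓝 (Gc 0 x)) := by
  have hfst : Tendsto (fun p : ℝ × Eucl n => p.1 ^ (0 + 1)) (𝓝[I] 0 ×ˢ 𝓝 x) (𝓝 0) := by
    simpa using (tendsto_fst (f := 𝓝[I] (0 : ℝ)) (g := 𝓝 x)).mono_right nhdsWithin_le_nhds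
  have h1 := (hG.isBigO hI hU hx 0).trans_tendsto hfst
  have h2 : Tendsto (fun p : ℝ × Eucl n => Gc 0 p.2) (𝓝[I] 0 ×ˢ 𝓝 x) (𝓝 (Gc 0 x)) :=
    ((hG.2.1 0).contDiffAt (hU.mem_nhds hx)).continuousAt.tendsto.comp tendsto_snd
  simpa using h1.add h2

end HasCinftyExpansion

section Compositions

variable {n : ℕ} {I : Set ℝ} {U V : Set (Eucl n)} {Gh Fh : ℝ → Eucl n → Eucl n}
  {Gc : ℕ → Eucl n → Eucl n} {F0 : Eucl n → Eucl n}

theorem comp_right_inverse_isBigO (hI : I ⊆ Ioi 0) (hU : IsOpen U) (hV : IsOpen V)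
    (hG : HasCinftyExpansion I U Gh Gc) (hF : HasCinftyExpansion I V Fh (inverseCoeff Gc F0))
    (H : ∀ z ∈ V, IsSmoothInverseAt Gc F0 z) {y : Eucl n} (hy : y ∈ V) (hyU : F0 y ∈ U) (N : ℕ) :
    (fun p : ℝ × Eucl n => Gh p.1 (Fh p.1 p.2) - p.2) =O[𝓝[I] 0 ×ˢ 𝓝 y] fun p => p.1 ^ N := by
  set l := 𝓝[I] (0 : ℝ) ×ˢ 𝓝 y
  have hl : l ≤ 𝓝 (0, y) := by
    rw [nhds_prod_eq]
    exact prod_mono_left _ nhdsWithin_le_nhds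
  have hfst : Tendsto (fun p : ℝ × Eucl n => p.1) l (𝓝[I] 0) := tendsto_fst
  have hfst' := hfst.mono_right nhdsWithin_le_nhds
  have hFt : Tendsto (fun p : ℝ × Eucl n => Fh p.1 p.2) l (𝓝 (F0 y)) := by
    simpa only [inverseCoeff_zero] using hF.tendsto hI hV hy
  have hG_sum := (hG.isBigO hI hU hyU N).comp_tendsto (hfst.prodMk hFt)
  have hΦF : (fun p : ℝ × Eucl n => Fh p.1 p.2 - approxInverse Gc F0 N p) =O[l]
      fun p => p.1 ^ (N + 1) :=
    ((hF.isBigO hI hV hy N).sub (((H y hy).approxInverse_sub_sum_isBigO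
      (eventually_of_mem (hV.mem_nhds hy) H) N).mono hl)).congr_left fun p => by abel
  have hsmooth : ContDiffAt ℝ ∞
      (fun q : ℝ × Eucl n => Gc 0 q.2 + q.1 • higherPart Gc N q) (0, F0 y) :=
    (((H y hy).contDiffAt 0).comp ((0 : ℝ), F0 y) contDiffAt_snd).add
      (contDiffAt_fst.smul (contDiffAt_higherPart (H y hy).contDiffAt N 0))
  have hlip := (hsmooth.isBigO_sub_comp_snd hfst' hFt
    (((H y hy).tendsto_approxInverse N).mono_left hl)).trans hΦF
  have hsum := (hG_sum.add hlip).add (((H y hy).approxInverse_isBigO N).mono hl)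
  have hpow : (fun p : ℝ × Eucl n => p.1 ^ (N + 1)) =O[l] fun p => p.1 ^ N :=
    ((isLittleO_pow_pow (Nat.lt_succ_self N)).isBigO.comp_tendsto hfst')
  refine (hsum.congr_left fun p => ?_).trans hpow
  simp only [Function.comp_apply,
    sum_pow_smul_eq_add_higherPart Gc N (p.1, Fh p.1 p.2)]
  abel

theorem comp_left_inverse_isBigO (hI : I ⊆ Ioi 0) (hU : IsOpen U) (hV : IsOpen V)
    (hG : HasCinftyExpansion I U Gh Gc) (hF : HasCinftyExpansion I V Fh (inverseCoeff Gc F0))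
    (H : ∀ z ∈ V, IsSmoothInverseAt Gc F0 z) {x : Eucl n} (hx : x ∈ U) (hxV : Gc 0 x ∈ V)
    (hFx : F0 (Gc 0 x) = x) (N : ℕ) :
    (fun p : ℝ × Eucl n => Fh p.1 (Gh p.1 p.2) - p.2) =O[𝓝[I] 0 ×ˢ 𝓝 x] fun p => p.1 ^ N := by
  set l := 𝓝[I] (0 : ℝ) ×ˢ 𝓝 x
  have hfst : Tendsto (fun p : ℝ × Eucl n => p.1) l (𝓝[I] 0) := tendsto_fst
  have hsnd : Tendsto (fun p : ℝ × Eucl n => p.2) l (𝓝 x) := tendsto_snd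
  have hGt := hfst.prodMk (hG.tendsto hI hU hx)
  have hFt : Tendsto (fun p : ℝ × Eucl n => Fh p.1 (Gh p.1 p.2)) l (𝓝 x) := by
    simpa only [inverseCoeff_zero, hFx, Function.comp_def] using (hF.tendsto hI hV hxV).comp hGt
  have hright := (comp_right_inverse_isBigO hI hU hV hG hF H hxV (by rwa [hFx]) N).comp_tendsto hGt
  have hD : (fun p : ℝ × Eucl n => (Gh p.1 (Fh p.1 (Gh p.1 p.2)) - Gc 0 (Fh p.1 (Gh p.1 p.2)))
      - (Gh p.1 p.2 - Gc 0 p.2)) =o[l] fun p => Fh p.1 (Gh p.1 p.2) - p.2 := by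
    have h1 := (hG.isBigO_sub hI hU hx).comp_tendsto (hfst.prodMk (hFt.prodMk_nhds hsnd))
    have h2 : (fun p : ℝ × Eucl n => p.1) =o[l] fun _ => (1 : ℝ) :=
      (isLittleO_one_iff ℝ).2 (hfst.mono_right nhdsWithin_le_nhds)
    have h3 := h2.smul_isBigO (isBigO_refl (fun p : ℝ × Eucl n => Fh p.1 (Gh p.1 p.2) - p.2) l)
    simp only [one_smul] at h3
    exact h1.trans_isLittleO h3
  have hG0 : ContDiffAt ℝ ∞ (Gc 0) x := (hG.2.1 0).contDiffAt (hU.mem_nhds hx)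
  have hleft : ∀ᶠ z in 𝓝 x, F0 (Gc 0 z) = z := by
    simpa only [hFx] using (H _ hxV).left_inv
  have hlip := (H _ hxV).contDiffAt_inv.isBigO_sub_comp
    (hG0.continuousAt.tendsto.comp hFt) (hG0.continuousAt.tendsto.comp hsnd)
  have hinv : (fun p : ℝ × Eucl n => Fh p.1 (Gh p.1 p.2) - p.2) =O[l]
      fun p => Gc 0 (Fh p.1 (Gh p.1 p.2)) - Gc 0 p.2 := by
    refine hlip.congr' ?_ EventuallyEq.rfl
    filter_upwards [hFt.eventually hleft, hsnd.eventually hleft] with p h1 h2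
    simp only [Function.comp_apply, h1, h2]
  have hmain : (fun p : ℝ × Eucl n => (Gc 0 (Fh p.1 (Gh p.1 p.2)) - Gc 0 p.2)) =O[l]
      fun p => p.1 ^ N := by
    have h4 := hD.trans_isBigO hinv
    have h5 := h4.right_isBigO_add
    refine h5.trans (hright.congr_left fun p => ?_)
    simp only [Function.comp_apply]
    abel
  exact hinv.trans hmain

end Compositions

/-- (Formal invertibility of asymptotic charts.) There are an open neighborhood `V` of
`closure B` and a family of smooth maps `Fh ℏ : V → ℝⁿ` with asymptotic expansion
`F₀ + ℏF₁ + ⋯` in the `C^∞(V)` topology, `F₀ = G₀⁻¹` on `V`, such that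
`Fh ∘ Gh = Id + O(ℏ^∞)` uniformly on compact subsets of `G₀⁻¹(V)` and
`Gh ∘ Fh = Id + O(ℏ^∞)` uniformly on compact subsets of `V ∩ G₀(U)`. -/
theorem formal_inverse_of_asymptotic_chart
    (n : ℕ) (hn : 1 ≤ n) (I : Set ℝ) (hI : I ⊆ Ioi 0) (hI0 : (0 : ℝ) ∈ closure I)
    (U B : Set (Eucl n)) (hU : IsOpen U) (hUb : Bornology.IsBounded U)
    (hB : IsOpen B) (hBb : Bornology.IsBounded B)
    (Gh : ℝ → Eucl n → Eucl n) (Gc : ℕ → Eucl n → Eucl n)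
    (hexp : HasCinftyExpansion I U Gh Gc)
    (hdiff : IsDiffeoOntoNbhd (Gc 0) U B) :
    ∃ V : Set (Eucl n), IsOpen V ∧ closure B ⊆ V ∧ V ⊆ Gc 0 '' U ∧
    ∃ (Fh : ℝ → Eucl n → Eucl n) (Fc : ℕ → Eucl n → Eucl n),
      HasCinftyExpansion I V Fh Fc ∧
      (∀ y ∈ V, Fc 0 y ∈ U ∧ Gc 0 (Fc 0 y) = y) ∧
      (∀ K : Set (Eucl n), K ⊆ U ∩ (Gc 0) ⁻¹' V → IsCompact K →
        ∃ h₀ > 0, (∀ h ∈ I, h ≤ h₀ → ∀ x ∈ K, Gh h x ∈ V) ∧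
          ∀ N : ℕ, ∃ C > 0, ∀ h ∈ I, h ≤ h₀ → ∀ x ∈ K,
            ‖Fh h (Gh h x) - x‖ ≤ C * h ^ N) ∧
      (∀ K' : Set (Eucl n), K' ⊆ V ∩ Gc 0 '' U → IsCompact K' →
        ∃ h₀' > 0, (∀ h ∈ I, h ≤ h₀' → ∀ y ∈ K', Fh h y ∈ U) ∧
          ∀ N : ℕ, ∃ C > 0, ∀ h ∈ I, h ≤ h₀' → ∀ y ∈ K',
            ‖Gh h (Fh h y) - y‖ ≤ C * h ^ N) := by
  obtain ⟨F0, hF0, hleft⟩ := hdiff.smooth_inv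
  set V := Gc 0 '' U
  have hV : IsOpen V := hdiff.isOpen_image
  have hF0V : ∀ y ∈ V, F0 y ∈ U ∧ Gc 0 (F0 y) = y := by
    rintro _ ⟨x, hx, rfl⟩
    rw [hleft x hx]
    exact ⟨hx, rfl⟩
  have H : ∀ y ∈ V, IsSmoothInverseAt Gc F0 y := fun y hy =>
    { contDiffAt := fun j => (hexp.2.1 j).contDiffAt (hU.mem_nhds (hF0V y hy).1)
      contDiffAt_inv := hF0.contDiffAt (hV.mem_nhds hy)
      right_inv := eventually_of_mem (hV.mem_nhds hy) fun z hz => (hF0V z hz).2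
      left_inv := eventually_of_mem (hU.mem_nhds (hF0V y hy).1) hleft }
  obtain ⟨Fh, hFh⟩ := exists_hasCinftyExpansion hI hV (Fc := inverseCoeff Gc F0) fun j y hy =>
    (contDiffAt_fstTaylorCoeff ((H y hy).contDiffAt_approxInverse j) j).contDiffWithinAt
  refine ⟨V, hV, hdiff.closure_subset_image, Subset.rfl, Fh, inverseCoeff Gc F0, hFh, ?_, ?_, ?_⟩
  · simpa only [inverseCoeff_zero] using hF0V
  · intro K hKV hK
    refine exists_forall_le_of_isBigO_pow hI hK (P := fun p => Gh p.1 p.2 ∈ V)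
      (f := fun p => Fh p.1 (Gh p.1 p.2) - p.2) (fun x hx => ?_) fun x hx N => ?_
    · exact (hexp.tendsto hI hU (hKV hx).1).eventually_mem (hV.mem_nhds (hKV hx).2)
    · exact comp_left_inverse_isBigO hI hU hV hexp hFh H (hKV hx).1 (hKV hx).2
        (hleft x (hKV hx).1) N
  · intro K' hKV hK'
    refine exists_forall_le_of_isBigO_pow hI hK' (P := fun p => Fh p.1 p.2 ∈ U)
      (f := fun p => Gh p.1 (Fh p.1 p.2) - p.2) (fun y hy => ?_) fun y hy N => ?_
    · refine (hFh.tendsto hI hV (hKV hy).1).eventually_mem (hU.mem_nhds ?_)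
      rw [inverseCoeff_zero]
      exact (hF0V y (hKV hy).1).1
    · exact comp_right_inverse_isBigO hI hU hV hexp hFh H (hKV hy).1 (hF0V y (hKV hy).1).1 N
end
end

section
/- (Uniform invertibility of asymptotic charts.) For every open set Ũ compactly contained in U there exists ℏ₀ > 0 such that for all ℏ ∈ 𝓘 ∩ (0,ℏ₀] the restriction of G_ℏ to Ũ is injective, hence a diffeomorphism onto its open image with smooth inverse; moreover this inverse agrees, up to O(ℏ^∞) uniformly on compact subsets of its domain, with the formal inverse F_ℏ (a family of smooth maps admitting an asymptotic expansion F₀ + ℏF₁ + ⋯ with F₀ = G₀⁻¹ and F_ℏ∘G_ℏ = Id + O(ℏ^∞)). -/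
open Set Metric

noncomputable section

open Filter Topology
open scoped ContDiff NNReal

section ParametricIntegral

universe u

variable {H : Type u} [NormedAddCommGroup H] [NormedSpace ℝ H] [ProperSpace H]

/-- Differentiation under the integral sign for a `C¹` integrand on `[0, 1]`. -/
theorem hasFDerivAt_intervalIntegral_of_contDiff {F : Type*} [NormedAddCommGroup F]
    [NormedSpace ℝ F] {f : H → ℝ → F} (hf : ContDiff ℝ 1 (fun p : H × ℝ => f p.1 p.2)) (x₀ : H) :
    HasFDerivAt (fun x => ∫ t in (0 : ℝ)..1, f x t)
      (∫ t in (0 : ℝ)..1,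
        (fderiv ℝ (fun p : H × ℝ => f p.1 p.2) (x₀, t)).comp
          (ContinuousLinearMap.inl ℝ H ℝ)) x₀ := by
  set D : H → ℝ → H →L[ℝ] F := fun x t =>
    (fderiv ℝ (fun p : H × ℝ => f p.1 p.2) (x, t)).comp (ContinuousLinearMap.inl ℝ H ℝ) with hD
  have hDc : Continuous (fun p : H × ℝ => D p.1 p.2) :=
    (hf.continuous_fderiv one_ne_zero).clm_comp continuous_const
  obtain ⟨M, hM⟩ := ((isCompact_closedBall x₀ 1).prod (isCompact_Icc (a := (0 : ℝ)) (b := 1)))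
    |>.exists_bound_of_continuousOn hDc.continuousOn
  have hfc : ∀ x, Continuous (f x) := fun x =>
    hf.continuous.comp (continuous_const.prodMk continuous_id)
  refine intervalIntegral.hasFDerivAt_integral_of_dominated_of_fderiv_le (F' := D)
    (bound := fun _ => M) (closedBall_mem_nhds x₀ one_pos) ?_ ?_ ?_ ?_ ?_ ?_
  · exact Eventually.of_forall fun x => (hfc x).aestronglyMeasurable
  · exact (hfc x₀).intervalIntegrable _ _
  · exact (hDc.comp (continuous_const.prodMk continuous_id)).aestronglyMeasurable
  · refine Eventually.of_forall fun t ht x hx => hM (x, t) ⟨hx, ?_⟩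
    rw [uIoc_of_le zero_le_one] at ht
    exact ⟨ht.1.le, ht.2⟩
  · exact intervalIntegrable_const
  · refine Eventually.of_forall fun t _ x _ => ?_
    have h1 := (hf.differentiable one_ne_zero (x, t)).hasFDerivAt
    exact HasFDerivAt.comp (f := fun y : H => (y, t)) x h1 (hasFDerivAt_prodMk_left x t)

/-- Smooth dependence on the parameter of the integral over `[0, 1]` of a smooth function. -/
theorem contDiff_intervalIntegral (n : ℕ) : ∀ {F : Type u} [NormedAddCommGroup F] [NormedSpace ℝ F]
    {f : H → ℝ → F}, ContDiff ℝ n (fun p : H × ℝ => f p.1 p.2) →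
    ContDiff ℝ n (fun x => ∫ t in (0 : ℝ)..1, f x t) := by
  induction n with
  | zero =>
    intro F _ _ f hf
    rw [Nat.cast_zero, contDiff_zero] at hf ⊢
    exact intervalIntegral.continuous_parametric_intervalIntegral_of_continuous' hf 0 1
  | succ n ih =>
    intro F _ _ f hf
    have hf1 : ContDiff ℝ 1 (fun p : H × ℝ => f p.1 p.2) := hf.of_le (by norm_cast; omega)
    push_cast
    rw [contDiff_succ_iff_hasFDerivAt]
    refine ⟨_, ?_, fun x => hasFDerivAt_intervalIntegral_of_contDiff hf1 x⟩
    apply ih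
    exact (hf.fderiv_right (m := n) (by norm_cast)).clm_comp contDiff_const

end ParametricIntegral

section Hadamard

variable {Z F : Type} [NormedAddCommGroup Z] [NormedSpace ℝ Z] [FiniteDimensional ℝ Z]
  [NormedAddCommGroup F] [NormedSpace ℝ F] [CompleteSpace F]

/-- **Hadamard's lemma** with parameters. -/
theorem exists_contDiff_eq_add_smul {f : ℝ × Z → F} (hf : ContDiff ℝ ∞ f) :
    ∃ g : ℝ × Z → F, ContDiff ℝ ∞ g ∧ ∀ h z, f (h, z) = f (0, z) + h • g (h, z) := by
  have : ProperSpace Z := FiniteDimensional.proper ℝ Z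
  refine ⟨fun p => ∫ t in (0 : ℝ)..1, fderiv ℝ f (t * p.1, p.2) (1, 0), ?_, ?_⟩
  · rw [contDiff_infty]
    intro n
    apply contDiff_intervalIntegral (H := ℝ × Z) (f := fun p t => fderiv ℝ f (t * p.1, p.2) (1, 0))
    have h1 : ContDiff ℝ n (fderiv ℝ f) := (contDiff_infty.1 hf (n + 1)).fderiv_right (by norm_cast)
    refine (h1.comp (g := fderiv ℝ f) ?_).clm_apply contDiff_const
    exact (contDiff_snd.mul (contDiff_fst.comp contDiff_fst)).prodMk
      (contDiff_snd.comp contDiff_fst)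
  · intro h z
    have hd : ∀ t : ℝ, HasDerivAt (fun t => f (t * h, z)) (h • fderiv ℝ f (t * h, z) (1, 0)) t := by
      intro t
      have h1 : HasDerivAt (fun t : ℝ => (t * h, z)) (h, 0) t :=
        (by simpa using (hasDerivAt_id t).mul_const h : HasDerivAt (fun t : ℝ => t * h) h t).prodMk
          (hasDerivAt_const t z)
      have h2 := ((hf.differentiable (by simp)) (t * h, z)).hasFDerivAt.comp_hasDerivAt t h1
      convert! h2 using 1
      rw [← map_smul]; simp
    have hc : Continuous fun t : ℝ => h • fderiv ℝ f (t * h, z) (1, 0) := by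
      have := hf.continuous_fderiv (by simp)
      fun_prop
    have := intervalIntegral.integral_eq_sub_of_hasDerivAt (a := 0) (b := 1) (fun t _ => hd t)
      (hc.intervalIntegrable _ _)
    rw [intervalIntegral.integral_smul] at this
    simp only [one_mul, zero_mul] at this
    rw [this]; abel

/-- Taylor expansion in the first variable, with smooth coefficients and remainder. -/
theorem exists_contDiff_taylor {f : ℝ × Z → F} (hf : ContDiff ℝ ∞ f) (N : ℕ) :
    ∃ (q : ℕ → Z → F) (g : ℝ × Z → F), (∀ j, ContDiff ℝ ∞ (q j)) ∧ ContDiff ℝ ∞ g ∧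
      ∀ h z, f (h, z) = ∑ j ∈ Finset.range N, h ^ j • q j z + h ^ N • g (h, z) := by
  induction N with
  | zero => exact ⟨fun _ _ => 0, f, fun _ => contDiff_const, hf, by simp⟩
  | succ N ih =>
    obtain ⟨q, g, hq, hg, hfg⟩ := ih
    obtain ⟨r, hr, hgr⟩ := exists_contDiff_eq_add_smul hg
    refine ⟨fun j z => if j < N then q j z else g (0, z), r, fun j => ?_, hr, fun h z => ?_⟩
    · dsimp only
      split_ifs
      · exact hq j
      · exact hg.comp (contDiff_const.prodMk contDiff_id)
    · rw [hfg, hgr h z, Finset.sum_range_succ]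
      simp only [lt_irrefl, if_false]
      have hs : ∑ j ∈ Finset.range N, h ^ j • (if j < N then q j z else g (0, z)) =
          ∑ j ∈ Finset.range N, h ^ j • q j z :=
        Finset.sum_congr rfl fun j hj => by rw [if_pos (Finset.mem_range.1 hj)]
      rw [hs, pow_succ]
      module

end Hadamard

/-- A map which is smooth on an open set agrees near each point of it with a globally smooth map. -/
theorem exists_contDiff_eventuallyEq {E F : Type*} [NormedAddCommGroup E] [NormedSpace ℝ E]
    [FiniteDimensional ℝ E] [NormedAddCommGroup F] [NormedSpace ℝ F] {U : Set E} (hU : IsOpen U)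
    {f : E → F} (hf : ContDiffOn ℝ ∞ f U) {x : E} (hx : x ∈ U) :
    ∃ g : E → F, ContDiff ℝ ∞ g ∧ g =ᶠ[𝓝 x] f := by
  obtain ⟨r, hr, hrU⟩ := nhds_basis_closedBall.mem_iff.1 (hU.mem_nhds hx)
  let c : ContDiffBump x := ⟨r / 2, r, half_pos hr, half_lt_self hr⟩
  refine ⟨fun y => c y • f y, ?_, ?_⟩
  · rw [contDiff_iff_contDiffAt]
    intro y
    by_cases hy : y ∈ U
    · exact c.contDiff.contDiffAt.smul (hf.contDiffAt (hU.mem_nhds hy))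
    · have hy' : y ∉ tsupport c := fun h => hy (hrU (by simpa [c.tsupport_eq] using h))
      refine (contDiffAt_const (c := (0 : F))).congr_of_eventuallyEq ?_
      filter_upwards [(isClosed_tsupport c).isOpen_compl.mem_nhds hy'] with z hz
      rw [image_eq_zero_of_notMem_tsupport hz, zero_smul]
  · filter_upwards [c.eventuallyEq_one] with y hy
    simp [hy]

/-- Pointwise version of `norm_iteratedFDeriv_comp_le`. -/
theorem norm_iteratedFDeriv_comp_le_of_contDiffAt {X Y Z : Type*} [NormedAddCommGroup X]
    [NormedSpace ℝ X] [NormedAddCommGroup Y] [NormedSpace ℝ Y] [NormedAddCommGroup Z]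
    [NormedSpace ℝ Z] {g : Y → Z} {f : X → Y} {n : ℕ} {x : X} (hg : ContDiffAt ℝ n g (f x))
    (hf : ContDiffAt ℝ n f x) {C D : ℝ} (hC : ∀ i ≤ n, ‖iteratedFDeriv ℝ i g (f x)‖ ≤ C)
    (hD : ∀ i, 1 ≤ i → i ≤ n → ‖iteratedFDeriv ℝ i f x‖ ≤ D ^ i) :
    ‖iteratedFDeriv ℝ n (g ∘ f) x‖ ≤ n.factorial * C * D ^ n := by
  obtain ⟨v, hv, hvo, hfxv⟩ := _root_.eventually_nhds_iff.1 (hg.eventually (by simp))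
  obtain ⟨u, hu, huo, hxu⟩ := _root_.eventually_nhds_iff.1
    ((hf.eventually (by simp)).and (hf.continuousAt.preimage_mem_nhds (hvo.mem_nhds hfxv)))
  have key := norm_iteratedFDerivWithin_comp_le (n := n) (N := n) (s := u) (t := v) (x := x)
    (g := g) (f := f) (C := C) (D := D)
    (fun y hy => (hv y hy).contDiffWithinAt) (fun y hy => (hu y hy).1.contDiffWithinAt) le_rfl
    hvo.uniqueDiffOn huo.uniqueDiffOn (fun y hy => (hu y hy).2) hxu
  simp only [iteratedFDerivWithin_of_isOpen _ huo hxu,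
    iteratedFDerivWithin_of_isOpen _ hvo hfxv] at key
  exact key hC hD

/-- The derivatives of order at most `d` of `f i` at `x i` are eventually bounded along `l`. -/
def DerivBounded {ι X Y : Type*} [NormedAddCommGroup X] [NormedSpace ℝ X] [NormedAddCommGroup Y]
    [NormedSpace ℝ Y] (d : ℕ) (l : Filter ι) (f : ι → X → Y) (x : ι → X) : Prop :=
  ∃ C, ∀ᶠ i in l, ContDiffAt ℝ ∞ (f i) (x i) ∧ ∀ k ≤ d, ‖iteratedFDeriv ℝ k (f i) (x i)‖ ≤ C

namespace DerivBounded

variable {ι X Y Z : Type*} [NormedAddCommGroup X] [NormedSpace ℝ X] [NormedAddCommGroup Y]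
  [NormedSpace ℝ Y] [NormedAddCommGroup Z] [NormedSpace ℝ Z] {d : ℕ} {l : Filter ι}
  {f : ι → X → Y} {x : ι → X}

theorem mono {l' : Filter ι} (hf : DerivBounded d l f x) (hl : l' ≤ l) : DerivBounded d l' f x :=
  hf.imp fun _ h => h.filter_mono hl

theorem congr {f' : ι → X → Y} (hf : DerivBounded d l f x)
    (h : ∀ᶠ i in l, f' i =ᶠ[𝓝 (x i)] f i) : DerivBounded d l f' x := by
  obtain ⟨C, hC⟩ := hf
  refine ⟨C, ?_⟩
  filter_upwards [hC, h] with i hi h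
  refine ⟨hi.1.congr_of_eventuallyEq h, fun k hk => ?_⟩
  rw [(Filter.EventuallyEq.iteratedFDeriv ℝ h k).eq_of_nhds]
  exact hi.2 k hk

theorem of_forall (h0 : ∀ᶠ i in l, ContDiffAt ℝ ∞ (f i) (x i))
    (h : ∀ k ≤ d, ∃ C, ∀ᶠ i in l, ‖iteratedFDeriv ℝ k (f i) (x i)‖ ≤ C) :
    DerivBounded d l f x := by
  choose! C hC using h
  refine ⟨∑ k ∈ Finset.range (d + 1), |C k|, ?_⟩
  have : ∀ᶠ i in l, ∀ k ∈ Finset.range (d + 1), ‖iteratedFDeriv ℝ k (f i) (x i)‖ ≤ C k :=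
    (Finset.eventually_all _).2 fun k hk => hC k (Nat.lt_succ_iff.1 (Finset.mem_range.1 hk))
  filter_upwards [h0, this] with i hi0 hi
  refine ⟨hi0, fun k hk => ?_⟩
  have hk' := Finset.mem_range.2 (Nat.lt_succ_iff.2 hk)
  exact ((hi k hk').trans (le_abs_self _)).trans
    (Finset.single_le_sum (f := fun k => |C k|) (fun _ _ => abs_nonneg _) hk')

theorem comp {g : ι → Y → Z} (hg : DerivBounded d l g fun i => f i (x i))
    (hf : DerivBounded d l f x) : DerivBounded d l (fun i => g i ∘ f i) x := by
  obtain ⟨C, hC⟩ := hg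
  obtain ⟨D, hD⟩ := hf
  refine of_forall ?_ fun k hk => ⟨k.factorial * C * (max 1 D) ^ k, ?_⟩
  · filter_upwards [hC, hD] with i hi hi'
    exact hi.1.comp _ hi'.1
  · filter_upwards [hC, hD] with i hi hi'
    refine norm_iteratedFDeriv_comp_le_of_contDiffAt (hi.1.of_le (by exact_mod_cast le_top))
      (hi'.1.of_le (by exact_mod_cast le_top)) (fun j hj => hi.2 j (hj.trans hk)) fun j h1 hj => ?_
    calc _ ≤ D := hi'.2 j (hj.trans hk)
      _ ≤ max 1 D := le_max_right _ _
      _ ≤ max 1 D ^ j := le_self_pow₀ (le_max_left _ _) (by omega)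

theorem prodMk {g : ι → X → Z} (hf : DerivBounded d l f x) (hg : DerivBounded d l g x) :
    DerivBounded d l (fun i y => (f i y, g i y)) x := by
  obtain ⟨C, hC⟩ := hf
  obtain ⟨D, hD⟩ := hg
  refine ⟨max C D, ?_⟩
  filter_upwards [hC, hD] with i hi hi'
  refine ⟨hi.1.prodMk hi'.1, fun k hk => ?_⟩
  rw [iteratedFDeriv_prodMk hi.1 hi'.1 (by exact_mod_cast le_top),
    ContinuousMultilinearMap.opNorm_prod]
  exact max_le_max (hi.2 k hk) (hi'.2 k hk)

theorem fderiv (hf : DerivBounded (d + 1) l f x) :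
    DerivBounded d l (fun i => fderiv ℝ (f i)) x := by
  obtain ⟨C, hC⟩ := hf
  refine ⟨C, ?_⟩
  filter_upwards [hC] with i hi
  refine ⟨hi.1.fderiv_right (by simp), fun k hk => ?_⟩
  rw [norm_iteratedFDeriv_fderiv]
  exact hi.2 (k + 1) (by omega)

theorem of_fderiv (hf : ∀ᶠ i in l, ContDiffAt ℝ ∞ (f i) (x i))
    (h0 : ∃ C, ∀ᶠ i in l, ‖f i (x i)‖ ≤ C)
    (h : DerivBounded d l (fun i => _root_.fderiv ℝ (f i)) x) : DerivBounded (d + 1) l f x := by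
  obtain ⟨C, hC⟩ := h
  refine of_forall hf fun k hk => ?_
  cases k with
  | zero => simpa using h0
  | succ k =>
    refine ⟨C, ?_⟩
    filter_upwards [hC] with i hi
    rw [← norm_iteratedFDeriv_fderiv]
    exact hi.2 k (by omega)

/-- A single smooth map has bounded derivatives along families of points in a compact set. -/
theorem of_isCompact {g : Y → Z} {O K : Set Y} (hO : IsOpen O) (hg : ContDiffOn ℝ ∞ g O)
    (hK : IsCompact K) (hKO : K ⊆ O) {y : ι → Y} (hy : ∀ᶠ i in l, y i ∈ K) :
    DerivBounded d l (fun _ => g) y := by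
  refine of_forall ?_ fun k _ => ?_
  · filter_upwards [hy] with i hi using hg.contDiffAt (hO.mem_nhds (hKO hi))
  · have hc : ContinuousOn (iteratedFDeriv ℝ k g) K := fun z hz =>
      ((hg.contDiffAt (hO.mem_nhds (hKO hz))).iteratedFDeriv_right (m := 0) (i := k)
        (by simpa using mod_cast le_top)).continuousAt.continuousWithinAt
    obtain ⟨C, hC⟩ := hK.exists_bound_of_continuousOn hc
    exact ⟨C, hy.mono fun i hi => hC _ hi⟩

end DerivBounded

section InverseFunction

variable {E F : Type*} [NormedAddCommGroup E] [NormedSpace ℝ E] [CompleteSpace E]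
  [NormedAddCommGroup F] [NormedSpace ℝ F]

/-- Every local left inverse of a smooth map with invertible derivative is smooth. -/
theorem ContDiffAt.contDiffAt_left_inverse {f : E → F} {g : F → E} {a : E}
    (hf : ContDiffAt ℝ ∞ f a) (hinv : (fderiv ℝ f a).IsInvertible)
    (hg : ∀ᶠ x in 𝓝 a, g (f x) = x) :
    ContDiffAt ℝ ∞ g (f a) ∧ fderiv ℝ g (f a) = (fderiv ℝ f a).inverse := by
  obtain ⟨e, he⟩ := hinv
  have hd : HasFDerivAt f (e : E →L[ℝ] F) a := he ▸ (hf.differentiableAt (by simp)).hasFDerivAt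
  have hs := hf.hasStrictFDerivAt' hd (by simp)
  refine ⟨(hf.to_localInverse hd (by simp)).congr_of_eventuallyEq (hs.localInverse_unique hg), ?_⟩
  rw [(hs.to_local_left_inverse hg).hasFDerivAt.fderiv, ← he, ContinuousLinearMap.inverse_equiv]

theorem ContDiffOn.isOpen_image_of_isInvertible {f : E → F} {W : Set E} (hW : IsOpen W)
    (hf : ContDiffOn ℝ ∞ f W) (hinv : ∀ x ∈ W, (fderiv ℝ f x).IsInvertible) :
    IsOpen (f '' W) := by
  rw [isOpen_iff_mem_nhds]
  rintro _ ⟨a, ha, rfl⟩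
  obtain ⟨e, he⟩ := hinv a ha
  have hfa := hf.contDiffAt (hW.mem_nhds ha)
  have hd : HasFDerivAt f (e : E →L[ℝ] F) a := he ▸ (hfa.differentiableAt (by simp)).hasFDerivAt
  rw [← (hfa.hasStrictFDerivAt' hd (by simp)).map_nhds_eq_of_equiv]
  exact image_mem_map (hW.mem_nhds ha)

/-- A left inverse, on an open set, of a smooth map with invertible derivatives is smooth. -/
theorem ContDiffOn.contDiffOn_left_inverse {f : E → F} {g : F → E} {W : Set E} (hW : IsOpen W)
    (hf : ContDiffOn ℝ ∞ f W) (hinv : ∀ x ∈ W, (fderiv ℝ f x).IsInvertible)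
    (hg : ∀ x ∈ W, g (f x) = x) : ContDiffOn ℝ ∞ g (f '' W) := by
  rintro _ ⟨a, ha, rfl⟩
  exact ((hf.contDiffAt (hW.mem_nhds ha)).contDiffAt_left_inverse (hinv a ha)
    (eventually_of_mem (hW.mem_nhds ha) hg)).1.contDiffWithinAt

/-- The local inverse of a smooth map can be taken to be a restriction of a globally smooth map. -/
theorem ContDiff.exists_contDiff_left_inverse [FiniteDimensional ℝ F] {f : E → F} {a : E}
    (hf : ContDiff ℝ ∞ f) (hinv : (fderiv ℝ f a).IsInvertible) :
    ∃ g : F → E, ContDiff ℝ ∞ g ∧ ∀ᶠ x in 𝓝 a, g (f x) = x := by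
  have hd0 := (hf.differentiable (by simp) a).hasFDerivAt
  obtain ⟨e, he⟩ := id hinv
  rw [← he] at hd0
  have hs := hf.contDiffAt.hasStrictFDerivAt' hd0 (by simp)
  set g := hs.localInverse f e a
  have hopen : ∀ᶠ x in 𝓝 a, (fderiv ℝ f x).IsInvertible :=
    (hf.continuous_fderiv (by simp)).continuousAt.preimage_mem_nhds
      (ContinuousLinearEquiv.isOpen.mem_nhds hinv)
  obtain ⟨W, hW, hWo, haW⟩ := _root_.eventually_nhds_iff.1 (hs.eventually_left_inverse.and hopen)
  obtain ⟨G, hG, hGg⟩ := exists_contDiff_eventuallyEq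
    (hf.contDiffOn.isOpen_image_of_isInvertible hWo fun x hx => (hW x hx).2)
    (hf.contDiffOn.contDiffOn_left_inverse hWo (fun x hx => (hW x hx).2) fun x hx => (hW x hx).1)
    (mem_image_of_mem f haW)
  refine ⟨G, hG, ?_⟩
  filter_upwards [hf.continuous.continuousAt.eventually hGg, hWo.mem_nhds haW] with x hx hxW
  rw [hx]
  exact (hW x hxW).1

end InverseFunction

theorem ContinuousLinearMap.isInvertible_of_injective {E : Type*} [NormedAddCommGroup E]
    [NormedSpace ℝ E] [FiniteDimensional ℝ E] {A : E →L[ℝ] E} (hA : Function.Injective A) :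
    A.IsInvertible :=
  ⟨(LinearEquiv.ofInjectiveEndo (A : E →ₗ[ℝ] E) hA).toContinuousLinearEquiv, by ext; rfl⟩

/-- Inversion of a smooth family of maps depending smoothly on a real parameter. -/
theorem ContDiff.exists_contDiff_parametric_left_inverse {E : Type*} [NormedAddCommGroup E]
    [NormedSpace ℝ E] [FiniteDimensional ℝ E] {P : ℝ × E → E} (hP : ContDiff ℝ ∞ P) {x₀ : E}
    (hinv : (fderiv ℝ (fun x => P (0, x)) x₀).IsInvertible) :
    ∃ Q : ℝ × E → E, ContDiff ℝ ∞ Q ∧ ∀ᶠ p in 𝓝 ((0 : ℝ), x₀), Q (p.1, P p) = p.2 := by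
  have : CompleteSpace E := FiniteDimensional.complete ℝ E
  have hΦ : ContDiff ℝ ∞ fun p : ℝ × E => (p.1, P p) := contDiff_fst.prodMk hP
  have hdP := (hP.differentiable (by simp) (0, x₀)).hasFDerivAt
  have hd0 : fderiv ℝ (fun x => P (0, x)) x₀ =
      (fderiv ℝ P (0, x₀)).comp (ContinuousLinearMap.inr ℝ ℝ E) :=
    (HasFDerivAt.comp (f := fun y : E => ((0 : ℝ), y)) x₀ hdP
      (hasFDerivAt_prodMk_right 0 x₀)).fderiv
  obtain ⟨g, hg, hgΦ⟩ := hΦ.exists_contDiff_left_inverse (a := (0, x₀)) <| by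
    rw [(hasFDerivAt_fst.prodMk hdP).fderiv]
    apply ContinuousLinearMap.isInvertible_of_injective
    rw [injective_iff_map_eq_zero]
    rintro ⟨h, v⟩ hv
    obtain ⟨rfl, hv⟩ : h = 0 ∧ fderiv ℝ P (0, x₀) (h, v) = 0 := by simpa using hv
    have : fderiv ℝ (fun x => P (0, x)) x₀ v = 0 := by simpa [hd0] using hv
    simpa using hinv.injective (this.trans (map_zero _).symm)
  exact ⟨fun p => (g p).2, contDiff_snd.comp hg, hgΦ.mono fun p hp => congrArg Prod.snd hp⟩

theorem IsCompact.eventually_forall_of_forall_prod_nhds {ι Y : Type*} [TopologicalSpace Y]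
    {l : Filter ι} {K : Set Y} (hK : IsCompact K) {P : ι → Y → Prop}
    (hP : ∀ y ∈ K, ∀ᶠ z in l ×ˢ 𝓝 y, P z.1 z.2) : ∀ᶠ x in l, ∀ y ∈ K, P x y := by
  have h : ∀ᶠ z in l ×ˢ 𝓝ˢ K, P z.1 z.2 := by
    rw [hK.prod_nhdsSet_eq_biSup]
    simpa only [eventually_iSup] using hP
  exact h.curry.mono fun _ h => h.self_of_nhdsSet

/-- The family `G h` converges in the `C¹` sense near `x₀` to `G₀` along `l`. -/
structure C1ConvergesAt {ι E F : Type*} [NormedAddCommGroup E] [NormedSpace ℝ E]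
    [NormedAddCommGroup F] [NormedSpace ℝ F] (l : Filter ι) (G : ι → E → F) (G₀ : E → F)
    (x₀ : E) : Prop where
  differentiableAt : ∀ᶠ p in l ×ˢ 𝓝 x₀, DifferentiableAt ℝ (G p.1) p.2
  tendsto : Tendsto (fun p : ι × E => G p.1 p.2) (l ×ˢ 𝓝 x₀) (𝓝 (G₀ x₀))
  tendsto_fderiv :
    Tendsto (fun p : ι × E => fderiv ℝ (G p.1) p.2) (l ×ˢ 𝓝 x₀) (𝓝 (fderiv ℝ G₀ x₀))

namespace C1ConvergesAt

variable {ι E F : Type*} [NormedAddCommGroup E] [NormedSpace ℝ E]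
  [NormedAddCommGroup F] [NormedSpace ℝ F] {l : Filter ι} {G : ι → E → F} {G₀ : E → F} {x₀ : E}

theorem eventually_approximatesLinearOn (hG : C1ConvergesAt l G G₀ x₀) {c : ℝ≥0} (hc : 0 < c) :
    ∃ r > 0, ∀ᶠ h in l, ApproximatesLinearOn (G h) (fderiv ℝ G₀ x₀) (ball x₀ r) c := by
  have h1 : ∀ᶠ p in l ×ˢ 𝓝 x₀, DifferentiableAt ℝ (G p.1) p.2 ∧
      ‖fderiv ℝ (G p.1) p.2 - fderiv ℝ G₀ x₀‖ ≤ c := by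
    filter_upwards [hG.differentiableAt,
      hG.tendsto_fderiv.eventually (closedBall_mem_nhds _ (NNReal.coe_pos.2 hc))] with p hp hp'
    exact ⟨hp, by simpa [dist_eq_norm] using hp'⟩
  obtain ⟨pa, ha, pb, hb, hab⟩ := eventually_prod_iff.1 h1
  obtain ⟨r, hr, hrb⟩ := Metric.eventually_nhds_iff_ball.1 hb
  refine ⟨r, hr, ?_⟩
  filter_upwards [ha] with h hh x hx y hy
  exact (convex_ball x₀ r).norm_image_sub_le_of_norm_hasFDerivWithin_le'
    (fun z hz => (hab hh (hrb z hz)).1.hasFDerivAt.hasFDerivWithinAt)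
    (fun z hz => (hab hh (hrb z hz)).2) hy hx

theorem eventually_injOn_ball (hG : C1ConvergesAt l G G₀ x₀)
    (hinv : (fderiv ℝ G₀ x₀).IsInvertible) : ∃ r > 0, ∀ᶠ h in l, InjOn (G h) (ball x₀ r) := by
  obtain ⟨e, he⟩ := hinv
  rcases subsingleton_or_nontrivial E with hE | hE
  · exact ⟨1, one_pos, Eventually.of_forall fun h => injOn_of_subsingleton _ _⟩
  have hpos : 0 < ‖(e.symm : F →L[ℝ] E)‖₊⁻¹ := inv_pos.2 e.nnnorm_symm_pos
  obtain ⟨r, hr, h⟩ := hG.eventually_approximatesLinearOn (half_pos hpos)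
  refine ⟨r, hr, h.mono fun h hh => ?_⟩
  rw [← he] at hh
  exact hh.injOn (Or.inr (NNReal.half_lt_self hpos.ne'))

theorem eventually_exists_eq [CompleteSpace E] (hG : C1ConvergesAt l G G₀ x₀)
    (hinv : (fderiv ℝ G₀ x₀).IsInvertible) {W : Set E} (hW : W ∈ 𝓝 x₀) :
    ∀ᶠ p in l ×ˢ 𝓝 (G₀ x₀), ∃ x ∈ W, G p.1 x = p.2 := by
  obtain ⟨e, he⟩ := hinv
  have htend : Tendsto (fun h => G h x₀) l (𝓝 (G₀ x₀)) :=
    hG.tendsto.comp (tendsto_id.prodMk (tendsto_const_pure.mono_right (pure_le_nhds x₀)))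
  rcases subsingleton_or_nontrivial F with hF | hF
  · exact Eventually.of_forall fun p => ⟨x₀, mem_of_mem_nhds hW, Subsingleton.elim _ _⟩
  have hE : Nontrivial E := e.symm.injective.nontrivial
  set N := e.toNonlinearRightInverse.nnnorm with hN
  have hpos : 0 < N⁻¹ := inv_pos.2 e.nnnorm_symm_pos
  obtain ⟨r, hr, h⟩ := hG.eventually_approximatesLinearOn (half_pos hpos)
  obtain ⟨s, hs, hsW⟩ := nhds_basis_closedBall.mem_iff.1 (inter_mem hW (ball_mem_nhds x₀ hr))
  have hρ : 0 < ((N : ℝ)⁻¹ - (N⁻¹ / 2 : ℝ≥0)) * s := by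
    have : (0 : ℝ) < (N : ℝ)⁻¹ := by exact_mod_cast hpos
    refine mul_pos ?_ hs
    push_cast
    linarith
  have hdist : ∀ᶠ p : ι × F in l ×ˢ 𝓝 (G₀ x₀), dist p.2 (G p.1 x₀) <
      ((N : ℝ)⁻¹ - (N⁻¹ / 2 : ℝ≥0)) * s := by
    have : Tendsto (fun p : ι × F => dist p.2 (G p.1 x₀)) (l ×ˢ 𝓝 (G₀ x₀)) (𝓝 0) := by
      have h := (tendsto_snd (f := l) (g := 𝓝 (G₀ x₀))).dist (htend.comp tendsto_fst)
      rwa [dist_self] at h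
    exact this.eventually_lt_const hρ
  filter_upwards [hdist, h.prod_inl _] with p hp hp'
  rw [← he] at hp'
  obtain ⟨x, hx, hxp⟩ := hp'.surjOn_closedBall_of_nonlinearRightInverse
    e.toNonlinearRightInverse hs.le (hsW.trans inter_subset_right) (mem_closedBall.2 hp.le)
  exact ⟨x, (hsW hx).1, hxp⟩

/-- Locally uniform perturbations of an injective immersion are injective on compact sets. -/
theorem eventually_injOn_of_isCompact {K : Set E} (hK : IsCompact K)
    (hG : ∀ x ∈ K, C1ConvergesAt l G G₀ x) (hinj : InjOn G₀ K)
    (hinv : ∀ x ∈ K, (fderiv ℝ G₀ x).IsInvertible) : ∀ᶠ h in l, InjOn (G h) K := by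
  have key : ∀ q ∈ K ×ˢ K, ∀ᶠ p in l ×ˢ 𝓝 q, G p.1 p.2.1 = G p.1 p.2.2 → p.2.1 = p.2.2 := by
    rintro ⟨a, b⟩ ⟨ha, hb⟩
    have h1 : Tendsto (fun p : ι × E × E => (p.1, p.2.1)) (l ×ˢ 𝓝 (a, b)) (l ×ˢ 𝓝 a) :=
      tendsto_fst.prodMk ((continuous_fst.tendsto (a, b)).comp tendsto_snd)
    have h2 : Tendsto (fun p : ι × E × E => (p.1, p.2.2)) (l ×ˢ 𝓝 (a, b)) (l ×ˢ 𝓝 b) :=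
      tendsto_fst.prodMk ((continuous_snd.tendsto (a, b)).comp tendsto_snd)
    by_cases hab : a = b
    · subst hab
      obtain ⟨r, hr, h⟩ := (hG a ha).eventually_injOn_ball (hinv a ha)
      have hball : ∀ᶠ q : ι × E in l ×ˢ 𝓝 a, q.2 ∈ ball a r :=
        tendsto_snd.eventually (ball_mem_nhds a hr)
      filter_upwards [h.prod_inl _, h1.eventually hball, h2.eventually hball] with p hp ha hb
      exact hp ha hb
    · have hne := (((hG a ha).tendsto.comp h1).prodMk_nhds ((hG b hb).tendsto.comp h2)).eventually
        (isClosed_diagonal.isOpen_compl.mem_nhds fun h => hab (hinj ha hb h))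
      exact hne.mono fun p hp h => absurd h hp
  filter_upwards [(hK.prod hK).eventually_forall_of_forall_prod_nhds
    (P := fun h q => G h q.1 = G h q.2 → q.1 = q.2) key] with h hh a ha b hb
  exact hh (a, b) ⟨ha, hb⟩

end C1ConvergesAt

namespace DerivBounded

variable {ι X Y Z : Type*} [NormedAddCommGroup X] [NormedSpace ℝ X] [NormedAddCommGroup Y]
  [NormedSpace ℝ Y] [NormedAddCommGroup Z] [NormedSpace ℝ Z] {d : ℕ} {l : Filter ι}
  {f : ι → X → Y} {x : ι → X}

theorem smooth_comp [FiniteDimensional ℝ Y] {g : Y → Z} (hg : ContDiff ℝ ∞ g)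
    (hf : DerivBounded d l f x) : DerivBounded d l (fun i => g ∘ f i) x := by
  obtain ⟨C, hC⟩ := id hf
  refine comp (g := fun _ => g) (of_isCompact isOpen_univ hg.contDiffOn
    (isCompact_closedBall (0 : Y) C) (subset_univ _) ?_) hf
  filter_upwards [hC] with i hi
  simpa using hi.2 0 (Nat.zero_le d)

theorem const {c : ι → Y} {C : ℝ} (h : ∀ᶠ i in l, ‖c i‖ ≤ C) :
    DerivBounded d l (fun i _ => c i) x := by
  refine of_forall (Eventually.of_forall fun i => contDiffAt_const) fun k _ => ⟨C, ?_⟩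
  filter_upwards [h] with i hi
  rcases eq_or_ne k 0 with rfl | hk
  · simpa using hi
  · rw [iteratedFDeriv_const_of_ne hk]
    simpa using (norm_nonneg _).trans hi

end DerivBounded

/-- The rescaled remainder of order `N` of an asymptotic expansion. -/
def asymptoticRemainder {X Y : Type*} [AddCommGroup Y] [Module ℝ Y] (Gh : ℝ → X → Y)
    (Gc : ℕ → X → Y) (N : ℕ) (h : ℝ) (y : X) : Y :=
  (h ^ (N + 1))⁻¹ • (Gh h y - ∑ j ∈ Finset.range (N + 1), h ^ j • Gc j y)

theorem eq_sum_add_asymptoticRemainder {X Y : Type*} [AddCommGroup Y] [Module ℝ Y]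
    (Gh : ℝ → X → Y) (Gc : ℕ → X → Y) (N : ℕ) {h : ℝ} (hh : h ≠ 0) (y : X) :
    Gh h y = ∑ j ∈ Finset.range (N + 1), h ^ j • Gc j y +
      h ^ (N + 1) • asymptoticRemainder Gh Gc N h y := by
  rw [asymptoticRemainder, smul_inv_smul₀ (pow_ne_zero _ hh), add_sub_cancel]

namespace HasCinftyExpansion

variable {n m : ℕ} {I : Set ℝ} {U : Set (Eucl n)} {Gh : ℝ → Eucl n → Eucl m}
  {Gc : ℕ → Eucl n → Eucl m} {ι : Type*} {l : Filter ι} {h : ι → ℝ} {x : ι → Eucl n}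
  {K : Set (Eucl n)}

theorem contDiffAt (hexp : HasCinftyExpansion I U Gh Gc) (hU : IsOpen U) {h : ℝ} (hh : h ∈ I)
    {x : Eucl n} (hx : x ∈ U) : ContDiffAt ℝ ∞ (Gh h) x :=
  (hexp.1 h hh).contDiffAt (hU.mem_nhds hx)

theorem contDiffAt_sub (hexp : HasCinftyExpansion I U Gh Gc) (hU : IsOpen U) {h : ℝ} (hh : h ∈ I)
    {x : Eucl n} (hx : x ∈ U) (N : ℕ) :
    ContDiffAt ℝ ∞ (fun y => Gh h y - ∑ j ∈ Finset.range (N + 1), h ^ j • Gc j y) x :=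
  (hexp.contDiffAt hU hh hx).sub <| ContDiffAt.sum fun j _ =>
    ((hexp.2.1 j).contDiffAt (hU.mem_nhds hx)).const_smul _

theorem derivBounded_remainder (hexp : HasCinftyExpansion I U Gh Gc) (hU : IsOpen U)
    (hI : I ⊆ Ioi 0) (hKU : K ⊆ U) (hK : IsCompact K) (hh : ∀ᶠ i in l, h i ∈ I)
    (hx : ∀ᶠ i in l, x i ∈ K) (N d : ℕ) :
    DerivBounded d l (fun i => asymptoticRemainder Gh Gc N (h i)) x := by
  refine DerivBounded.of_forall ?_ fun k _ => ?_
  · filter_upwards [hh, hx] with i hi hxi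
    exact (hexp.contDiffAt_sub hU hi (hKU hxi) N).const_smul _
  · obtain ⟨C, -, hC⟩ := hexp.2.2 N K hKU hK k
    refine ⟨C, ?_⟩
    filter_upwards [hh, hx] with i hi hxi
    have hpos : 0 < h i ^ (N + 1) := pow_pos (hI hi) _
    have := hC _ hi _ hxi
    rw [iteratedFDerivWithin_of_isOpen _ hU (hKU hxi)] at this
    change ‖iteratedFDeriv ℝ k (fun y => (h i ^ (N + 1))⁻¹ • (Gh (h i) y -
      ∑ j ∈ Finset.range (N + 1), h i ^ j • Gc j y)) (x i)‖ ≤ C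
    rw [iteratedFDeriv_const_smul_apply' ((hexp.contDiffAt_sub hU hi (hKU hxi) N).of_le
      (by exact_mod_cast le_top)), norm_smul, norm_inv, Real.norm_of_nonneg hpos.le,
      inv_mul_le_iff₀ hpos, mul_comm]
    exact this

theorem derivBounded (hexp : HasCinftyExpansion I U Gh Gc) (hU : IsOpen U)
    (hI : I ⊆ Ioi 0) (hKU : K ⊆ U) (hK : IsCompact K) (hh : ∀ᶠ i in l, h i ∈ I) {H : ℝ}
    (hH : ∀ᶠ i in l, h i ≤ H) (hx : ∀ᶠ i in l, x i ∈ K) (d : ℕ) :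
    DerivBounded d l (fun i => Gh (h i)) x := by
  have h1 : DerivBounded d l (fun _ => Gc 0) x :=
    DerivBounded.of_isCompact hU (hexp.2.1 0) hK hKU hx
  have h2 := hexp.derivBounded_remainder hU hI hKU hK hh hx 0 d
  have h3 : DerivBounded d l (fun i (_ : Eucl n) => h i) x := by
    refine DerivBounded.const (C := H) ?_
    filter_upwards [hh, hH] with i hi hi'
    rwa [Real.norm_of_nonneg (le_of_lt (hI hi))]
  have hg : ContDiff ℝ ∞ fun p : Eucl m × ℝ × Eucl m => p.1 + p.2.1 • p.2.2 := by fun_prop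
  refine ((h1.prodMk (h3.prodMk h2)).smooth_comp hg).congr ?_
  filter_upwards [hh] with i hi
  refine Eventually.of_forall fun y => ?_
  simpa using eq_sum_add_asymptoticRemainder Gh Gc 0 (ne_of_gt (hI hi)) y

theorem c1ConvergesAt (hexp : HasCinftyExpansion I U Gh Gc) (hU : IsOpen U) {x₀ : Eucl n}
    (hx : x₀ ∈ U) : C1ConvergesAt (𝓝[I] 0) Gh (Gc 0) x₀ := by
  obtain ⟨r, hr, hrU⟩ := nhds_basis_closedBall.mem_iff.1 (hU.mem_nhds hx)
  have hev : ∀ᶠ p : ℝ × Eucl n in 𝓝[I] 0 ×ˢ 𝓝 x₀, p.1 ∈ I ∧ p.2 ∈ closedBall x₀ r :=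
    prod_mem_prod self_mem_nhdsWithin (closedBall_mem_nhds x₀ hr)
  have hlim (C : ℝ) : Tendsto (fun p : ℝ × Eucl n => C * p.1) (𝓝[I] 0 ×ˢ 𝓝 x₀) (𝓝 0) := by
    have h : Tendsto id (𝓝[I] (0 : ℝ)) (𝓝 0) := nhdsWithin_le_nhds
    simpa using (h.comp tendsto_fst).const_mul C
  have h0 : ContDiffAt ℝ ∞ (Gc 0) x₀ := (hexp.2.1 0).contDiffAt (hU.mem_nhds hx)
  have hsub : ∀ h, (fun y => Gh h y - ∑ j ∈ Finset.range (0 + 1), h ^ j • Gc j y) =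
      Gh h - Gc 0 := fun h => by ext1 y; simp
  refine ⟨hev.mono fun p hp => (hexp.contDiffAt hU hp.1 (hrU hp.2)).differentiableAt (by simp),
    ?_, ?_⟩
  · obtain ⟨C, -, hC⟩ := hexp.2.2 0 _ hrU (isCompact_closedBall x₀ r) 0
    have h1 : Tendsto (fun p : ℝ × Eucl n => Gh p.1 p.2 - Gc 0 p.2) (𝓝[I] 0 ×ˢ 𝓝 x₀) (𝓝 0) := by
      refine squeeze_zero_norm' (hev.mono fun p hp => ?_) (hlim C)
      have := hC _ hp.1 _ hp.2
      rwa [iteratedFDerivWithin_of_isOpen _ hU (hrU hp.2), hsub, norm_iteratedFDeriv_zero,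
        zero_add, pow_one] at this
    simpa using h1.add (h0.continuousAt.tendsto.comp tendsto_snd)
  · obtain ⟨C, -, hC⟩ := hexp.2.2 0 _ hrU (isCompact_closedBall x₀ r) 1
    have h1 : Tendsto (fun p : ℝ × Eucl n => fderiv ℝ (Gh p.1) p.2 - fderiv ℝ (Gc 0) p.2)
        (𝓝[I] 0 ×ˢ 𝓝 x₀) (𝓝 0) := by
      refine squeeze_zero_norm' (hev.mono fun p hp => ?_) (hlim C)
      have := hC _ hp.1 _ hp.2
      rwa [iteratedFDerivWithin_of_isOpen _ hU (hrU hp.2), hsub, norm_iteratedFDeriv_one,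
        fderiv_sub ((hexp.contDiffAt hU hp.1 (hrU hp.2)).differentiableAt (by simp))
          (((hexp.2.1 0).contDiffAt (hU.mem_nhds (hrU hp.2))).differentiableAt (by simp)),
        zero_add, pow_one] at this
    have h2 : ContinuousAt (fderiv ℝ (Gc 0)) x₀ :=
      (h0.fderiv_right (m := 0) (by simp)).continuousAt
    simpa using h1.add (h2.tendsto.comp tendsto_snd)

end HasCinftyExpansion

theorem Filter.Eventually.eventually_nhds_snd {ι Y : Type*} [TopologicalSpace Y] {l : Filter ι}
    {y : Y} {P : ι × Y → Prop} (h : ∀ᶠ p in l ×ˢ 𝓝 y, P p) :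
    ∀ᶠ p in l ×ˢ 𝓝 y, ∀ᶠ z in 𝓝 p.2, P (p.1, z) := by
  obtain ⟨pa, ha, pb, hb, hab⟩ := eventually_prod_iff.1 h
  exact eventually_prod_iff.2 ⟨pa, ha, _, eventually_eventually_nhds.2 hb,
    fun hx _ hy => hy.mono fun _ hz => hab hx hz⟩

/-- Local asymptotic expansion of the inverse of a family with an asymptotic expansion. -/
theorem HasCinftyExpansion.exists_local_expansion_inverse {n : ℕ} {I : Set ℝ} {U : Set (Eucl n)}
    {Gh Fh : ℝ → Eucl n → Eucl n} {Gc : ℕ → Eucl n → Eucl n} (hexp : HasCinftyExpansion I U Gh Gc)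
    (hU : IsOpen U) (hI : I ⊆ Ioi 0) {x₀ y₀ : Eucl n} (hx₀ : x₀ ∈ U)
    (hinv : (fderiv ℝ (Gc 0) x₀).IsInvertible)
    (hFtend : Tendsto (fun p : ℝ × Eucl n => Fh p.1 p.2) (𝓝[I] 0 ×ˢ 𝓝 y₀) (𝓝 x₀))
    (hGF : ∀ᶠ p : ℝ × Eucl n in 𝓝[I] 0 ×ˢ 𝓝 y₀, Gh p.1 (Fh p.1 p.2) = p.2)
    (hFb : ∀ d, DerivBounded d (𝓝[I] 0 ×ˢ 𝓝 y₀) (fun p : ℝ × Eucl n => Fh p.1) Prod.snd)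
    (N : ℕ) : ∃ q : ℕ → Eucl n → Eucl n, (∀ j, ContDiff ℝ ∞ (q j)) ∧
      ∀ d, DerivBounded d (𝓝[I] 0 ×ˢ 𝓝 y₀)
        (fun p : ℝ × Eucl n => asymptoticRemainder Fh q N p.1) Prod.snd := by
  choose Gt hGt hGtc using fun j => exists_contDiff_eventuallyEq hU (hexp.2.1 j) hx₀
  set P : ℝ × Eucl n → Eucl n := fun p => ∑ j ∈ Finset.range (N + 1), p.1 ^ j • Gt j p.2 with hPdef
  have hP : ContDiff ℝ ∞ P := ContDiff.sum fun j _ =>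
    (contDiff_fst.pow j).smul ((hGt j).comp contDiff_snd)
  have hP0 : (fun x => P (0, x)) = Gt 0 := by
    ext1 x
    simp [hPdef, Finset.sum_range_succ']
  obtain ⟨Q, hQ, hQP⟩ := hP.exists_contDiff_parametric_left_inverse (x₀ := x₀)
    (by rwa [hP0, (hGtc 0).fderiv_eq])
  obtain ⟨q, r, hq, hr, hqr⟩ := exists_contDiff_taylor hQ (N + 1)
  have hf : ContDiff ℝ ∞ fun p : ℝ × ℝ × Eucl n × Eucl n => Q (p.2.1, p.2.2.1 - p.1 • p.2.2.2) :=
    hQ.comp (by fun_prop)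
  obtain ⟨g, hg, hfg⟩ := exists_contDiff_eq_add_smul hf
  refine ⟨q, hq, fun d => ?_⟩
  have hIev : ∀ᶠ p : ℝ × Eucl n in 𝓝[I] 0 ×ˢ 𝓝 y₀, p.1 ∈ I :=
    Eventually.prod_inl self_mem_nhdsWithin _
  obtain ⟨ρ, hρ, hρU⟩ := nhds_basis_closedBall.mem_iff.1 (hU.mem_nhds hx₀)
  have hS : DerivBounded d (𝓝[I] 0 ×ˢ 𝓝 y₀)
      (fun p : ℝ × Eucl n => asymptoticRemainder Gh Gc N p.1 ∘ Fh p.1) Prod.snd :=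
    DerivBounded.comp (hexp.derivBounded_remainder hU hI hρU (isCompact_closedBall x₀ ρ) hIev
      (hFtend.eventually (closedBall_mem_nhds x₀ hρ)) N d) (hFb d)
  have hfst : Tendsto (fun p : ℝ × Eucl n => p.1) (𝓝[I] 0 ×ˢ 𝓝 y₀) (𝓝 0) :=
    Tendsto.mono_right tendsto_fst nhdsWithin_le_nhds
  have hc : DerivBounded d (𝓝[I] 0 ×ˢ 𝓝 y₀) (fun (p : ℝ × Eucl n) (_ : Eucl n) => p.1)
      Prod.snd := by
    refine DerivBounded.const (C := 1) ?_
    simpa using hfst.eventually (closedBall_mem_nhds 0 one_pos)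
  have hid : DerivBounded d (𝓝[I] 0 ×ˢ 𝓝 y₀) (fun (p : ℝ × Eucl n) (y : Eucl n) => y)
      Prod.snd :=
    DerivBounded.of_isCompact isOpen_univ contDiff_id.contDiffOn (isCompact_closedBall y₀ 1)
      (subset_univ _) (tendsto_snd.eventually (closedBall_mem_nhds y₀ one_pos))
  have hΘ : ContDiff ℝ ∞ fun p : ℝ × Eucl n × Eucl n =>
      r (p.1, p.2.1) + g (p.1 ^ (N + 1), p) :=
    (hr.comp (by fun_prop)).add (hg.comp (by fun_prop))
  refine ((hc.prodMk (hid.prodMk hS)).smooth_comp hΘ).congr ?_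
  have hev : ∀ᶠ p : ℝ × Eucl n in 𝓝[I] 0 ×ˢ 𝓝 y₀, p.1 ∈ I ∧ Gh p.1 (Fh p.1 p.2) = p.2 ∧
      Q (p.1, P (p.1, Fh p.1 p.2)) = Fh p.1 p.2 ∧
      ∀ j ∈ Finset.range (N + 1), Gt j (Fh p.1 p.2) = Gc j (Fh p.1 p.2) :=
    hIev.and <| hGF.and <| ((hfst.prodMk_nhds hFtend).eventually hQP).and <|
      hFtend.eventually ((Finset.eventually_all _).2 fun j _ => hGtc j)
  filter_upwards [hev.eventually_nhds_snd] with p hp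
  filter_upwards [hp] with y hy
  obtain ⟨hpI, hG, hQ', hGc⟩ := hy
  have hpos : (0 : ℝ) < p.1 := hI hpI
  set S := asymptoticRemainder Gh Gc N p.1 (Fh p.1 y) with hSdef
  have h1 : P (p.1, Fh p.1 y) = y - p.1 ^ (N + 1) • S := by
    have := eq_sum_add_asymptoticRemainder Gh Gc N hpos.ne' (Fh p.1 y)
    rw [← Finset.sum_congr rfl fun j hj => congrArg (p.1 ^ j • ·) (hGc j hj)] at this
    rw [hG] at this
    exact eq_sub_of_add_eq this.symm
  have h2 : Fh p.1 y = ∑ j ∈ Finset.range (N + 1), p.1 ^ j • q j y +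
      p.1 ^ (N + 1) • (r (p.1, y) + g (p.1 ^ (N + 1), p.1, y, S)) := by
    have h3 := hfg (p.1 ^ (N + 1)) (p.1, y, S)
    simp only [zero_smul, sub_zero] at h3
    rw [← hQ', h1, h3, hqr, smul_add, add_assoc]
  have hne : p.1 ^ (N + 1) ≠ 0 := (pow_pos hpos _).ne'
  change (p.1 ^ (N + 1))⁻¹ • (Fh p.1 y - _) = r (p.1, y) + g (p.1 ^ (N + 1), p.1, y, S)
  rw [inv_smul_eq_iff₀ hne]
  exact sub_eq_of_eq_add' h2

/-- Derivatives of inverse maps are controlled by the derivatives of the maps. -/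
theorem derivBounded_inverse {ι E : Type*} [NormedAddCommGroup E] [NormedSpace ℝ E]
    [FiniteDimensional ℝ E] {l : Filter ι} {G F : ι → E → E} {y : ι → E}
    (hG : ∀ d, DerivBounded d l G fun i => F i (y i)) {𝒦 : Set (E →L[ℝ] E)} (h𝒦 : IsCompact 𝒦)
    (h𝒦inv : ∀ A ∈ 𝒦, A.IsInvertible) (hmem : ∀ᶠ i in l, fderiv ℝ (G i) (F i (y i)) ∈ 𝒦)
    (hF : ∀ᶠ i in l, ∀ᶠ z in 𝓝 (y i), ContDiffAt ℝ ∞ (F i) z ∧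
      fderiv ℝ (F i) z = (fderiv ℝ (G i) (F i z)).inverse)
    {C : ℝ} (hC : ∀ᶠ i in l, ‖F i (y i)‖ ≤ C) (d : ℕ) : DerivBounded d l F y := by
  have : CompleteSpace E := FiniteDimensional.complete ℝ E
  have hF' : ∀ᶠ i in l, ContDiffAt ℝ ∞ (F i) (y i) := hF.mono fun i hi => hi.self_of_nhds.1
  induction d with
  | zero =>
    refine DerivBounded.of_forall hF' fun k hk => ⟨C, ?_⟩
    obtain rfl : k = 0 := Nat.le_zero.1 hk
    simpa using hC
  | succ d ih =>
    refine DerivBounded.of_fderiv hF' ⟨C, hC⟩ ?_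
    have hO : IsOpen {A : E →L[ℝ] E | A.IsInvertible} := ContinuousLinearEquiv.isOpen
    have hinv : ContDiffOn ℝ ∞ (ContinuousLinearMap.inverse : (E →L[ℝ] E) → E →L[ℝ] E)
        {A | A.IsInvertible} := fun A hA =>
      (ContinuousLinearMap.IsInvertible.contDiffAt_map_inverse hA).contDiffWithinAt
    have h1 := (DerivBounded.of_isCompact (d := d) hO hinv h𝒦 h𝒦inv hmem).comp (hG (d + 1)).fderiv
    refine (h1.comp ih).congr ?_
    filter_upwards [hF] with i hi
    exact hi.mono fun z hz => hz.2

section Uniqueness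

variable {Y : Type*} [NormedAddCommGroup Y] [NormedSpace ℝ Y] {l : Filter ℝ}

theorem eq_zero_of_sum_pow_smul_isBigO_s3 [l.NeBot] (hl : Tendsto id l (𝓝 0)) (hl0 : ∀ᶠ h in l, h ≠ 0)
    {M : ℕ} {c : ℕ → Y}
    (hc : (fun h : ℝ => ∑ j ∈ Finset.range M, h ^ j • c j) =O[l] fun h => h ^ M) :
    ∀ j < M, c j = 0 := by
  induction M generalizing c with
  | zero => simp
  | succ M ih =>
    have h0 : c 0 = 0 := by
      have h1 : Tendsto (fun h : ℝ => ∑ j ∈ Finset.range (M + 1), h ^ j • c j) l (𝓝 0) :=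
        hc.trans_tendsto (by simpa using hl.pow (M + 1))
      have h2 : Tendsto (fun h : ℝ => ∑ j ∈ Finset.range (M + 1), h ^ j • c j) l
          (𝓝 (∑ j ∈ Finset.range (M + 1), (0 : ℝ) ^ j • c j)) :=
        tendsto_finsetSum _ fun j _ => (hl.pow j).smul_const _
      have := tendsto_nhds_unique h1 h2
      rw [Finset.sum_range_succ'] at this
      simpa using this.symm
    have h1 : (fun h : ℝ => ∑ j ∈ Finset.range M, h ^ j • c (j + 1)) =O[l] fun h => h ^ M := by
      obtain ⟨C, hC⟩ := hc.bound
      refine Asymptotics.IsBigO.of_bound C ?_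
      filter_upwards [hC, hl0] with h hh hne
      have hpos : 0 < ‖h‖ := norm_pos_iff.2 hne
      rw [Finset.sum_range_succ', h0] at hh
      simp only [smul_zero, add_zero, pow_succ', mul_smul, ← Finset.smul_sum] at hh
      rw [norm_smul, norm_mul, mul_left_comm] at hh
      exact le_of_mul_le_mul_left hh hpos
    intro j hj
    cases j with
    | zero => exact h0
    | succ j => exact ih h1 j (by omega)

theorem isBigO_sub_sum_of_le (hl : Tendsto id l (𝓝 0)) {φ : ℝ → Y} {c : ℕ → Y} {N N' : ℕ}
    (hN : N ≤ N')
    (h : (fun h => φ h - ∑ j ∈ Finset.range (N' + 1), h ^ j • c j) =O[l] fun h => h ^ (N' + 1)) :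
    (fun h => φ h - ∑ j ∈ Finset.range (N + 1), h ^ j • c j) =O[l] fun h => h ^ (N + 1) := by
  induction N', hN using Nat.le_induction with
  | base => exact h
  | succ k hk ih =>
    refine ih ?_
    have hpow : (fun h : ℝ => h ^ (k + 1 + 1)) =O[l] fun h => h ^ (k + 1) := by
      simpa [pow_succ] using (Asymptotics.isBigO_refl (fun h : ℝ => h ^ (k + 1)) l).mul
        (hl.isBigO_one ℝ)
    have h2 : (fun h : ℝ => h ^ (k + 1) • c (k + 1)) =O[l] fun h => h ^ (k + 1) :=
      Asymptotics.IsBigO.of_bound ‖c (k + 1)‖ (Eventually.of_forall fun h => by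
        rw [norm_smul, mul_comm])
    refine ((h.trans hpow).add h2).congr_left fun x => ?_
    rw [Finset.sum_range_succ _ (k + 1)]
    abel

theorem eq_of_isBigO_sub_sum [l.NeBot] (hl : Tendsto id l (𝓝 0)) (hl0 : ∀ᶠ h in l, h ≠ 0)
    {φ : ℝ → Y} {c c' : ℕ → Y} {N N' : ℕ}
    (h : (fun h => φ h - ∑ j ∈ Finset.range (N + 1), h ^ j • c j) =O[l] fun h => h ^ (N + 1))
    (h' : (fun h => φ h - ∑ j ∈ Finset.range (N' + 1), h ^ j • c' j) =O[l] fun h => h ^ (N' + 1))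
    {j : ℕ} (hj : j ≤ N) (hj' : j ≤ N') : c j = c' j := by
  have h1 := (isBigO_sub_sum_of_le hl hj' h').sub (isBigO_sub_sum_of_le hl hj h)
  have := eq_zero_of_sum_pow_smul_isBigO_s3 (M := j + 1) (c := fun j => c j - c' j) hl hl0
    (h1.congr_left fun x => ?_) j (Nat.lt_succ_self j)
  · exact sub_eq_zero.1 this
  · simp only [smul_sub, Finset.sum_sub_distrib]
    abel

end Uniqueness

theorem pow_le_mul_pow_of_le {δ h : ℝ} (hδ : 0 < δ) (hh : δ ≤ h) {j M : ℕ} (hj : j ≤ M) :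
    h ^ j ≤ δ ^ j / δ ^ M * h ^ M := by
  have h1 : (h / δ) ^ j ≤ (h / δ) ^ M := pow_le_pow_right₀ ((one_le_div hδ).2 hh) hj
  rw [div_pow, div_pow, div_le_iff₀ (pow_pos hδ j)] at h1
  exact h1.trans_eq (by ring)

section Assembly

variable {n : ℕ} {I : Set ℝ} {V : Set (Eucl n)} {Fh : ℝ → Eucl n → Eucl n}

theorem derivBounded_remainder_of_eventuallyEq (hI : I ⊆ Ioi 0) {q Fc : ℕ → Eucl n → Eucl n}
    {y₀ : Eucl n} {N d : ℕ}
    (hq : DerivBounded d (𝓝[I] 0 ×ˢ 𝓝 y₀)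
      (fun p : ℝ × Eucl n => asymptoticRemainder Fh q N p.1) Prod.snd)
    (hqF : ∀ j ≤ N, Fc j =ᶠ[𝓝 y₀] q j) :
    ∃ C, ∀ᶠ p : ℝ × Eucl n in 𝓝[I] 0 ×ˢ 𝓝 y₀,
      ‖iteratedFDeriv ℝ d (fun y => Fh p.1 y - ∑ j ∈ Finset.range (N + 1), p.1 ^ j • Fc j y) p.2‖
        ≤ C * p.1 ^ (N + 1) := by
  obtain ⟨C, hC⟩ := hq
  refine ⟨C, ?_⟩
  have hIev : ∀ᶠ p : ℝ × Eucl n in 𝓝[I] 0 ×ˢ 𝓝 y₀, p.1 ∈ I :=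
    Eventually.prod_inl self_mem_nhdsWithin _
  have hev : ∀ᶠ p : ℝ × Eucl n in 𝓝[I] 0 ×ˢ 𝓝 y₀,
      ∀ j ∈ Finset.range (N + 1), Fc j p.2 = q j p.2 :=
    tendsto_snd.eventually ((Finset.eventually_all _).2 fun j hj =>
      hqF j (Nat.lt_succ_iff.1 (Finset.mem_range.1 hj)))
  filter_upwards [hC, hIev, hev.eventually_nhds_snd] with p hp hpI hpe
  have hpos : 0 < p.1 ^ (N + 1) := pow_pos (hI hpI) _
  have heq : (fun y => Fh p.1 y - ∑ j ∈ Finset.range (N + 1), p.1 ^ j • Fc j y) =ᶠ[𝓝 p.2]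
      fun y => p.1 ^ (N + 1) • asymptoticRemainder Fh q N p.1 y := by
    filter_upwards [hpe] with y hy
    rw [asymptoticRemainder, smul_inv_smul₀ hpos.ne',
      Finset.sum_congr rfl fun j hj => congrArg (p.1 ^ j • ·) (hy j hj)]
  rw [(heq.iteratedFDeriv ℝ d).eq_of_nhds, iteratedFDeriv_const_smul_apply' (hp.1.of_le
    (by exact_mod_cast le_top)), norm_smul, Real.norm_of_nonneg hpos.le, mul_comm]
  exact mul_le_mul_of_nonneg_right (hp.2 d le_rfl) hpos.le

/-- Local asymptotic expansions of a family with bounded derivatives patch together. -/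
theorem exists_hasCinftyExpansion_of_local (hV : IsOpen V) (hI : I ⊆ Ioi 0)
    (hI0 : (0 : ℝ) ∈ closure I) (hFs : ∀ h ∈ I, ContDiffOn ℝ ∞ (Fh h) V)
    (hFb : ∀ K ⊆ V, IsCompact K → ∀ d, ∃ C, ∀ h ∈ I, ∀ y ∈ K, ‖iteratedFDeriv ℝ d (Fh h) y‖ ≤ C)
    (hloc : ∀ y₀ ∈ V, ∀ N, ∃ q : ℕ → Eucl n → Eucl n, (∀ j, ContDiff ℝ ∞ (q j)) ∧
      ∀ d, DerivBounded d (𝓝[I] 0 ×ˢ 𝓝 y₀)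
        (fun p : ℝ × Eucl n => asymptoticRemainder Fh q N p.1) Prod.snd) :
    ∃ Fc, HasCinftyExpansion I V Fh Fc := by
  have : (𝓝[I] (0 : ℝ)).NeBot := mem_closure_iff_nhdsWithin_neBot.1 hI0
  have hl : Tendsto id (𝓝[I] (0 : ℝ)) (𝓝 0) := nhdsWithin_le_nhds
  have hl0 : ∀ᶠ h in 𝓝[I] (0 : ℝ), h ≠ 0 := eventually_of_mem self_mem_nhdsWithin
    fun h hh => (hI hh).ne'
  choose! q hq hqb using hloc
  have hO : ∀ y₀ ∈ V, ∀ N, ∀ᶠ y in 𝓝 y₀,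
      (fun h => Fh h y - ∑ j ∈ Finset.range (N + 1), h ^ j • q y₀ N j y) =O[𝓝[I] 0]
        fun h => h ^ (N + 1) := by
    intro y₀ hy₀ N
    obtain ⟨C, hC⟩ := derivBounded_remainder_of_eventuallyEq hI (hqb y₀ hy₀ N 0)
      fun j _ => EventuallyEq.rfl
    obtain ⟨pa, ha, pb, hb, hab⟩ := eventually_prod_iff.1 hC
    filter_upwards [hb] with y hy
    refine Asymptotics.IsBigO.of_bound C ?_
    filter_upwards [ha, self_mem_nhdsWithin] with h hh hhI
    rw [Real.norm_of_nonneg (pow_pos (hI hhI) _).le]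
    simpa using hab hh hy
  set Fc : ℕ → Eucl n → Eucl n := fun j y => q y j j y with hFc
  have hagree : ∀ y₀ ∈ V, ∀ N, ∀ j ≤ N, Fc j =ᶠ[𝓝 y₀] q y₀ N j := by
    intro y₀ hy₀ N j hj
    filter_upwards [hO y₀ hy₀ N, hV.mem_nhds hy₀] with y hy hyV
    exact eq_of_isBigO_sub_sum (c := fun i => q y j i y) (c' := fun i => q y₀ N i y) hl hl0
      (hO y hyV j).self_of_nhds hy le_rfl hj
  have hFcs : ∀ j, ∀ y ∈ V, ContDiffAt ℝ ∞ (Fc j) y := fun j y hy =>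
    (hq y hy j j).contDiffAt.congr_of_eventuallyEq (hagree y hy j j le_rfl)
  refine ⟨Fc, hFs, fun j y hy => (hFcs j y hy).contDiffWithinAt, fun N K hKV hK d => ?_⟩
  have hsmall : ∃ C, ∀ᶠ h in 𝓝[I] (0 : ℝ), ∀ y ∈ K,
      ‖iteratedFDeriv ℝ d (fun y => Fh h y - ∑ j ∈ Finset.range (N + 1), h ^ j • Fc j y) y‖
        ≤ C * h ^ (N + 1) := by
    refine hK.induction_on ⟨0, by simp⟩ (fun s t hst ht => ht.imp fun C hC =>
      hC.mono fun h hh y hy => hh y (hst hy)) ?_ fun y₀ hy₀ => ?_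
    · rintro s t ⟨C, hC⟩ ⟨D, hD⟩
      refine ⟨max C D, ?_⟩
      filter_upwards [hC, hD, self_mem_nhdsWithin] with h h1 h2 hhI y hy
      have hpos : 0 ≤ h ^ (N + 1) := (pow_pos (hI hhI) _).le
      rcases hy with hy | hy
      · exact (h1 y hy).trans (mul_le_mul_of_nonneg_right (le_max_left _ _) hpos)
      · exact (h2 y hy).trans (mul_le_mul_of_nonneg_right (le_max_right _ _) hpos)
    · obtain ⟨C, hC⟩ := derivBounded_remainder_of_eventuallyEq hI (hqb y₀ (hKV hy₀) N d)
        (hagree y₀ (hKV hy₀) N)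
      obtain ⟨pa, ha, pb, hb, hab⟩ := eventually_prod_iff.1 hC
      exact ⟨{y | pb y}, mem_nhdsWithin_of_mem_nhds hb, C, ha.mono fun h hh y hy => hab hh hy⟩
  obtain ⟨C, hC⟩ := hsmall
  obtain ⟨δ, hδ, hδC⟩ := (nhdsWithin_hasBasis nhds_basis_ball I).mem_iff.1 hC
  obtain ⟨D, hD⟩ := hFb K hKV hK d
  have hE : ∀ j, ∃ E, ∀ y ∈ K, ‖iteratedFDeriv ℝ d (Fc j) y‖ ≤ E := fun j =>
    hK.exists_bound_of_continuousOn fun y hy =>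
      ((hFcs j y (hKV hy)).iteratedFDeriv_right (m := 0) (i := d)
        (by simpa using mod_cast le_top)).continuousAt.continuousWithinAt
  choose E hE using hE
  set C' : ℝ := D * (δ ^ 0 / δ ^ (N + 1)) +
    ∑ j ∈ Finset.range (N + 1), δ ^ j / δ ^ (N + 1) * E j with hC'
  refine ⟨max 1 (max C C'), lt_max_of_lt_left one_pos, fun h hh y hy => ?_⟩
  have hpos : 0 < h := hI hh
  rw [iteratedFDerivWithin_of_isOpen _ hV (hKV hy)]
  have hmax : ∀ {a : ℝ}, a ≤ max C C' → a * h ^ (N + 1) ≤ max 1 (max C C') * h ^ (N + 1) :=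
    fun ha => mul_le_mul_of_nonneg_right (ha.trans (le_max_right _ _)) (by positivity)
  rcases lt_or_ge h δ with hlt | hge
  · have hmem : h ∈ ball 0 δ ∩ I := ⟨by simpa [abs_of_pos hpos] using hlt, hh⟩
    exact (hδC hmem y hy).trans (hmax (le_max_left _ _))
  · refine le_trans ?_ (hmax (le_max_right _ _))
    have hd : ((d : ℕ∞) : WithTop ℕ∞) ≤ ∞ := by exact_mod_cast le_top
    have hcF := ((hFs h hh).contDiffAt (hV.mem_nhds (hKV hy))).of_le hd
    have hcs : ∀ j ∈ Finset.range (N + 1), ContDiffAt ℝ d (fun y => h ^ j • Fc j y) y :=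
      fun j _ => ((hFcs j y (hKV hy)).of_le hd).const_smul _
    have hD0 : 0 ≤ D := (norm_nonneg _).trans (hD h hh y hy)
    have hE0 : ∀ j, 0 ≤ E j := fun j => (norm_nonneg _).trans (hE j y hy)
    calc _ ≤ ‖iteratedFDeriv ℝ d (Fh h) y‖ + ‖iteratedFDeriv ℝ d
            (fun y => ∑ j ∈ Finset.range (N + 1), h ^ j • Fc j y) y‖ := by
          rw [fun_iteratedFDeriv_sub_apply hcF (ContDiffAt.sum hcs)]
          exact norm_sub_le _ _
      _ ≤ D * h ^ 0 + ∑ j ∈ Finset.range (N + 1), h ^ j * E j := by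
          rw [pow_zero, mul_one]
          refine add_le_add (hD h hh y hy) ?_
          rw [iteratedFDeriv_fun_sum_apply hcs]
          refine (norm_sum_le _ _).trans (Finset.sum_le_sum fun j _ => ?_)
          rw [iteratedFDeriv_const_smul_apply' ((hFcs j y (hKV hy)).of_le hd), norm_smul,
            Real.norm_of_nonneg (by positivity)]
          exact mul_le_mul_of_nonneg_left (hE j y hy) (by positivity)
      _ ≤ D * (δ ^ 0 / δ ^ (N + 1) * h ^ (N + 1)) +
            ∑ j ∈ Finset.range (N + 1), δ ^ j / δ ^ (N + 1) * h ^ (N + 1) * E j :=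
          add_le_add (mul_le_mul_of_nonneg_left (pow_le_mul_pow_of_le hδ hge (Nat.zero_le _)) hD0)
            (Finset.sum_le_sum fun j hj => mul_le_mul_of_nonneg_right
              (pow_le_mul_pow_of_le hδ hge (Finset.mem_range.1 hj).le) (hE0 j))
      _ = C' * h ^ (N + 1) := by
          rw [hC', add_mul, Finset.sum_mul, mul_assoc]
          exact congrArg _ (Finset.sum_congr rfl fun j _ => by ring)

end Assembly

theorem exists_forall_le_of_eventually_nhdsWithin_zero {I : Set ℝ} (hI : I ⊆ Ioi 0) {P : ℝ → Prop}
    (h : ∀ᶠ h in 𝓝[I] (0 : ℝ), P h) : ∃ δ > 0, ∀ h ∈ I, h ≤ δ → P h := by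
  obtain ⟨δ, hδ, hP⟩ := (nhdsWithin_hasBasis nhds_basis_closedBall I).mem_iff.1 h
  refine ⟨δ, hδ, fun h hh hle => hP ⟨?_, hh⟩⟩
  simpa [abs_of_pos (mem_Ioi.1 (hI hh))] using hle

/-- Over a relatively compact open set `V`, a family with an asymptotic expansion whose leading
term is a diffeomorphism has an inverse family with an asymptotic expansion. -/
theorem HasCinftyExpansion.exists_inverse {n : ℕ} {I : Set ℝ} (hI : I ⊆ Ioi 0)
    (hI0 : (0 : ℝ) ∈ closure I) {U : Set (Eucl n)} (hU : IsOpen U) {Gh : ℝ → Eucl n → Eucl n}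
    {Gc : ℕ → Eucl n → Eucl n} (hexp : HasCinftyExpansion I U Gh Gc) (hinj : InjOn (Gc 0) U)
    (hinv : ∀ x ∈ U, (fderiv ℝ (Gc 0) x).IsInvertible) {V L : Set (Eucl n)} (hV : IsOpen V)
    (hVc : IsCompact (closure V)) (hL : IsCompact L) (hLU : L ⊆ U) {F₀ : Eucl n → Eucl n}
    (hF₀ : ∀ y ∈ closure V, F₀ y ∈ interior L ∧ Gc 0 (F₀ y) = y) :
    ∃ δ > 0, ∃ (Fh : ℝ → Eucl n → Eucl n) (Fc : ℕ → Eucl n → Eucl n),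
      HasCinftyExpansion I V Fh Fc ∧ (∀ y ∈ V, Fc 0 y = F₀ y) ∧
      (∀ h ∈ I, h ≤ δ → ∀ x ∈ interior L, Fh h (Gh h x) = x) ∧
      ∀ h ∈ I, h ≤ δ → ∀ y ∈ V, Fh h y ∈ interior L ∧ Gh h (Fh h y) = y := by
  have hne : (𝓝[I] (0 : ℝ)).NeBot := mem_closure_iff_nhdsWithin_neBot.1 hI0
  have hIntU : interior L ⊆ U := interior_subset.trans hLU
  have hC1 : ∀ x ∈ U, C1ConvergesAt (𝓝[I] 0) Gh (Gc 0) x := fun x hx => hexp.c1ConvergesAt hU hx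
  have hcont : ContinuousOn (fderiv ℝ (Gc 0)) L := fun x hx =>
    (((hexp.2.1 0).contDiffAt (hU.mem_nhds (hLU hx))).fderiv_right (m := 0)
      (by simp)).continuousAt.continuousWithinAt
  have hO : IsOpen {A : Eucl n →L[ℝ] Eucl n | A.IsInvertible} := ContinuousLinearEquiv.isOpen
  have : ProperSpace (Eucl n →L[ℝ] Eucl n) := FiniteDimensional.proper ℝ _
  obtain ⟨𝒦, h𝒦, hL𝒦, h𝒦inv⟩ := exists_compact_between (hL.image_of_continuousOn hcont) hO
    (by rintro _ ⟨x, hx, rfl⟩; exact hinv x (hLU hx))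
  have hev1 : ∀ᶠ h in 𝓝[I] 0, InjOn (Gh h) L :=
    C1ConvergesAt.eventually_injOn_of_isCompact hL (fun x hx => hC1 x (hLU hx)) (hinj.mono hLU)
      fun x hx => hinv x (hLU hx)
  have hev2 : ∀ᶠ h in 𝓝[I] 0, ∀ x ∈ L, fderiv ℝ (Gh h) x ∈ 𝒦 :=
    hL.eventually_forall_of_forall_prod_nhds (P := fun h x => fderiv ℝ (Gh h) x ∈ 𝒦)
      fun x hx => (hC1 x (hLU hx)).tendsto_fderiv.eventually
        (mem_interior_iff_mem_nhds.1 (hL𝒦 (mem_image_of_mem _ hx)))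
  have hsurj : ∀ y ∈ closure V, ∀ W ∈ 𝓝 (F₀ y),
      ∀ᶠ p in 𝓝[I] 0 ×ˢ 𝓝 y, ∃ x ∈ W, Gh p.1 x = p.2 := by
    intro y hy W hW
    obtain ⟨hyL, hGy⟩ := hF₀ y hy
    have := (hC1 _ (hIntU hyL)).eventually_exists_eq (hinv _ (hIntU hyL)) hW
    rwa [hGy] at this
  have hev3 : ∀ᶠ h in 𝓝[I] 0, ∀ y ∈ closure V, ∃ x ∈ interior L, Gh h x = y :=
    hVc.eventually_forall_of_forall_prod_nhds (P := fun h y => ∃ x ∈ interior L, Gh h x = y)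
      fun y hy => hsurj y hy _ (isOpen_interior.mem_nhds (hF₀ y hy).1)
  obtain ⟨δ, hδ, hall⟩ :=
    exists_forall_le_of_eventually_nhdsWithin_zero hI (hev1.and (hev2.and hev3))
  obtain ⟨Fh, hFpos, hFneg⟩ : ∃ Fh : ℝ → Eucl n → Eucl n,
      (∀ h ≤ δ, Fh h = Function.invFunOn (Gh h) (interior L)) ∧
      ∀ h, ¬ h ≤ δ → Fh h = fun _ => 0 :=
    ⟨fun h => if h ≤ δ then Function.invFunOn (Gh h) (interior L) else fun _ => 0,
      fun h hh => if_pos hh, fun h hh => if_neg hh⟩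
  have hFG : ∀ h ∈ I, h ≤ δ → ∀ x ∈ interior L, Fh h (Gh h x) = x := by
    intro h hh hle x hx
    have hex : ∃ a ∈ interior L, Gh h a = Gh h x := ⟨x, hx, rfl⟩
    rw [hFpos h hle]
    exact (hall h hh hle).1 (interior_subset (Function.invFunOn_mem hex)) (interior_subset hx)
      (Function.invFunOn_eq hex)
  have hGF : ∀ h ∈ I, h ≤ δ → ∀ y ∈ V, Fh h y ∈ interior L ∧ Gh h (Fh h y) = y := by
    intro h hh hle y hy
    obtain ⟨x, hx, rfl⟩ := (hall h hh hle).2.2 y (subset_closure hy)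
    rw [hFG h hh hle x hx]
    exact ⟨hx, rfl⟩
  have hFd : ∀ h ∈ I, h ≤ δ → ∀ y ∈ V, ContDiffAt ℝ ∞ (Fh h) y ∧
      fderiv ℝ (Fh h) y = (fderiv ℝ (Gh h) (Fh h y)).inverse := by
    intro h hh hle y hy
    obtain ⟨hyL, hGy⟩ := hGF h hh hle y hy
    have := (hexp.contDiffAt hU hh (hIntU hyL)).contDiffAt_left_inverse (g := Fh h)
      (h𝒦inv ((hall h hh hle).2.1 _ (interior_subset hyL)))
      (eventually_of_mem (isOpen_interior.mem_nhds hyL) (hFG h hh hle))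
    rwa [hGy] at this
  have hTev : ∀ y ∈ V, ∀ᶠ p : ℝ × Eucl n in 𝓝[I] 0 ×ˢ 𝓝 y, p.1 ∈ I ∧ p.1 ≤ δ ∧ p.2 ∈ V := by
    intro y hy
    have h1 : ∀ᶠ h in 𝓝[I] (0 : ℝ), h ∈ I ∧ h ≤ δ :=
      (eventually_mem_nhdsWithin).and (nhdsWithin_le_nhds (Iic_mem_nhds hδ))
    filter_upwards [h1.prod_inl (𝓝 y), (hV.eventually_mem hy).prod_inr (𝓝[I] 0)]
      with p h1 h2 using ⟨h1.1, h1.2, h2⟩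
  have hFtend : ∀ y ∈ V, Tendsto (fun p : ℝ × Eucl n => Fh p.1 p.2) (𝓝[I] 0 ×ˢ 𝓝 y)
      (𝓝 (F₀ y)) := by
    refine fun y hy => tendsto_def.2 fun W hW => ?_
    filter_upwards [hTev y hy, hsurj y (subset_closure hy) _
      (inter_mem hW (isOpen_interior.mem_nhds (hF₀ y (subset_closure hy)).1))]
    rintro ⟨h, z⟩ ⟨hh, hle, -⟩ ⟨x, ⟨hxW, hxL⟩, hxz⟩
    have hz : Fh h z = x := (congrArg (Fh h) hxz.symm).trans (hFG h hh hle x hxL)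
    rwa [mem_preimage, hz]
  set T : Set (ℝ × Eucl n) := {p | p.1 ∈ I ∧ p.1 ≤ δ ∧ p.2 ∈ V} with hT
  have hTp : ∀ᶠ p in 𝓟 T, p.1 ∈ I ∧ p.1 ≤ δ ∧ p.2 ∈ V := mem_principal_self T
  have hFL : ∀ᶠ p in 𝓟 T, Fh p.1 p.2 ∈ L := hTp.mono fun p hp =>
    interior_subset (hGF _ hp.1 hp.2.1 _ hp.2.2).1
  obtain ⟨C, hC⟩ := hL.exists_bound_of_continuousOn continuousOn_id
  have hFb : ∀ d, DerivBounded d (𝓟 T) (fun p : ℝ × Eucl n => Fh p.1) Prod.snd :=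
    derivBounded_inverse (G := fun p => Gh p.1)
      (hexp.derivBounded (h := Prod.fst) hU hI hLU hL (hTp.mono fun p hp => hp.1)
        (hTp.mono fun p hp => hp.2.1) hFL) h𝒦 h𝒦inv
      (hTp.mono fun p hp => (hall _ hp.1 hp.2.1).2.1 _
        (interior_subset (hGF _ hp.1 hp.2.1 _ hp.2.2).1))
      (hTp.mono fun p hp => eventually_of_mem (hV.mem_nhds hp.2.2) (hFd _ hp.1 hp.2.1))
      (hFL.mono fun p hp => hC _ hp)
  obtain ⟨Fc, hFc⟩ := exists_hasCinftyExpansion_of_local (Fh := Fh) hV hI hI0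
    (fun h hh => by
      by_cases hle : h ≤ δ
      · exact fun y hy => (hFd h hh hle y hy).1.contDiffWithinAt
      · rw [hFneg h hle]
        exact contDiffOn_const)
    (fun K hKV hK d => by
      obtain ⟨D, hD⟩ := hFb d
      refine ⟨max D 0, fun h hh y hy => ?_⟩
      by_cases hle : h ≤ δ
      · exact ((eventually_principal.1 hD (h, y) ⟨hh, hle, hKV hy⟩).2 d le_rfl).trans
          (le_max_left _ _)
      · rw [hFneg h hle, iteratedFDeriv_fun_zero]
        simp)
    (fun y hy N => by
      obtain ⟨hyL, hGy⟩ := hF₀ y (subset_closure hy)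
      exact hexp.exists_local_expansion_inverse hU hI (hIntU hyL) (hinv _ (hIntU hyL))
        (hFtend y hy) ((hTev y hy).mono fun p hp => (hGF _ hp.1 hp.2.1 _ hp.2.2).2)
        (fun d => (hFb d).mono (le_principal_iff.2 (hTev y hy))) N)
  exact ⟨δ, hδ, Fh, Fc, hFc, fun y hy => tendsto_nhds_unique (hFc.c1ConvergesAt hV hy).tendsto
    (hFtend y hy), hFG, hGF⟩

theorem IsDiffeoOntoNbhd.isInvertible_fderiv {n : ℕ} {G₀ : Eucl n → Eucl n} {U B : Set (Eucl n)}
    (h : IsDiffeoOntoNbhd G₀ U B) (hU : IsOpen U) {x : Eucl n} (hx : x ∈ U) :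
    (fderiv ℝ G₀ x).IsInvertible := by
  obtain ⟨F₀, hF₀, hinv⟩ := h.smooth_inv
  have hG := ((h.contDiffOn.contDiffAt (hU.mem_nhds hx)).differentiableAt (by simp)).hasFDerivAt
  have hF := ((hF₀.contDiffAt (h.isOpen_image.mem_nhds (mem_image_of_mem _ hx))).differentiableAt
    (by simp)).hasFDerivAt
  have hid : HasFDerivAt (F₀ ∘ G₀) (ContinuousLinearMap.id ℝ (Eucl n)) x :=
    (hasFDerivAt_id x).congr_of_eventuallyEq (eventually_of_mem (hU.mem_nhds hx) hinv)
  have hcomp := (hF.comp x hG).unique hid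
  exact ContinuousLinearMap.isInvertible_of_injective
    (Function.LeftInverse.injective (g := fderiv ℝ F₀ (G₀ x)) fun v => DFunLike.congr_fun hcomp v)

/-- (Uniform invertibility of asymptotic charts.) For every open set `Ũ` compactly
contained in `U` there is `ℏ₀ > 0` such that for all `ℏ ∈ I ∩ (0,ℏ₀]` the restriction
of `Gh ℏ` to `Ũ` is injective, hence a diffeomorphism onto its open image with a smooth
inverse; moreover this inverse agrees, up to `O(ℏ^∞)` uniformly on compact subsets of
its domain, with the formal inverse `Fh` (a family of smooth maps admitting an
asymptotic expansion `F₀ + ℏF₁ + ⋯` with `F₀ = G₀⁻¹` and `Fh ∘ Gh = Id + O(ℏ^∞)`). -/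
theorem uniform_invertibility_of_asymptotic_chart
    (n : ℕ) (hn : 1 ≤ n) (I : Set ℝ) (hI : I ⊆ Ioi 0) (hI0 : (0 : ℝ) ∈ closure I)
    (U B : Set (Eucl n)) (hU : IsOpen U) (hUb : Bornology.IsBounded U)
    (hB : IsOpen B) (hBb : Bornology.IsBounded B)
    (Gh : ℝ → Eucl n → Eucl n) (Gc : ℕ → Eucl n → Eucl n)
    (hexp : HasCinftyExpansion I U Gh Gc)
    (hdiff : IsDiffeoOntoNbhd (Gc 0) U B) :
    ∃ V : Set (Eucl n), IsOpen V ∧ closure B ⊆ V ∧ V ⊆ Gc 0 '' U ∧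
    ∃ (Fh : ℝ → Eucl n → Eucl n) (Fc : ℕ → Eucl n → Eucl n),
      -- `Fh` is the formal inverse of `Gh`:
      HasCinftyExpansion I V Fh Fc ∧
      (∀ y ∈ V, Fc 0 y ∈ U ∧ Gc 0 (Fc 0 y) = y) ∧
      (∀ K : Set (Eucl n), K ⊆ U ∩ (Gc 0) ⁻¹' V → IsCompact K →
        ∃ h₁ > 0, (∀ h ∈ I, h ≤ h₁ → ∀ x ∈ K, Gh h x ∈ V) ∧
          ∀ N : ℕ, ∃ C > 0, ∀ h ∈ I, h ≤ h₁ → ∀ x ∈ K,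
            ‖Fh h (Gh h x) - x‖ ≤ C * h ^ N) ∧
      -- uniform invertibility on open sets compactly contained in `U`:
      (∀ Ut : Set (Eucl n), IsOpen Ut → IsCompact (closure Ut) → closure Ut ⊆ U →
        ∃ h₀ > 0, ∃ Hinv : ℝ → Eucl n → Eucl n,
          (∀ h ∈ I, h ≤ h₀ →
            InjOn (Gh h) Ut ∧ IsOpen (Gh h '' Ut) ∧
            ContDiffOn ℝ (⊤ : ℕ∞) (Hinv h) (Gh h '' Ut) ∧
            (∀ x ∈ Ut, Hinv h (Gh h x) = x)) ∧
          -- the inverse agrees with the formal inverse up to O(ℏ^∞) on compact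
          -- subsets of its domain:
          (∀ K : Set (Eucl n), K ⊆ V → IsCompact K → ∀ N : ℕ, ∃ C > 0,
            ∀ h ∈ I, h ≤ h₀ → ∀ y ∈ K ∩ Gh h '' Ut,
              ‖Hinv h y - Fh h y‖ ≤ C * h ^ N)) := by
  have hinv : ∀ x ∈ U, (fderiv ℝ (Gc 0) x).IsInvertible :=
    fun x hx => hdiff.isInvertible_fderiv hU hx
  have hC1 : ∀ x ∈ U, C1ConvergesAt (𝓝[I] 0) Gh (Gc 0) x := fun x hx => hexp.c1ConvergesAt hU hx
  obtain ⟨F₀, hF₀, hFG₀⟩ := hdiff.smooth_inv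
  have hF₀U : ∀ y ∈ Gc 0 '' U, F₀ y ∈ U ∧ Gc 0 (F₀ y) = y := by
    rintro _ ⟨x, hx, rfl⟩
    rw [hFG₀ x hx]
    exact ⟨hx, rfl⟩
  obtain ⟨A, hA, hBA, hAU⟩ := exists_compact_between hBb.isCompact_closure hdiff.isOpen_image
    hdiff.closure_subset_image
  have hVA : closure (interior A) ⊆ A := closure_minimal interior_subset hA.isClosed
  have hVc : IsCompact (closure (interior A)) := hA.of_isClosed_subset isClosed_closure hVA
  obtain ⟨L, hL, hFL, hLU⟩ := exists_compact_between
    (hA.image_of_continuousOn (hF₀.continuousOn.mono hAU)) hU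
    (by rintro _ ⟨y, hy, rfl⟩; exact (hF₀U y (hAU hy)).1)
  obtain ⟨δ, hδ, Fh, Fc, hFexp, hFc0, hFG, hGF⟩ := hexp.exists_inverse hI hI0 hU hdiff.injOn hinv
    isOpen_interior hVc hL hLU (F₀ := F₀)
    fun y hy => ⟨hFL (mem_image_of_mem _ (hVA hy)), (hF₀U y (hAU (hVA hy))).2⟩
  refine ⟨interior A, isOpen_interior, hBA, interior_subset.trans hAU, Fh, Fc, hFexp,
    fun y hy => ?_, fun K hKU hK => ?_, fun Ut hUt hUtc hUtU => ?_⟩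
  · rw [hFc0 y hy]
    exact hF₀U y (hAU (interior_subset hy))
  · have hev : ∀ᶠ h in 𝓝[I] 0, ∀ x ∈ K, Gh h x ∈ interior A :=
      hK.eventually_forall_of_forall_prod_nhds (P := fun h x => Gh h x ∈ interior A)
        fun x hx => (hC1 x (hKU hx).1).tendsto.eventually (isOpen_interior.mem_nhds (hKU hx).2)
    obtain ⟨δ', hδ', hall⟩ := exists_forall_le_of_eventually_nhdsWithin_zero hI hev
    refine ⟨min δ δ', lt_min hδ hδ', fun h hh hle => hall h hh (hle.trans (min_le_right _ _)),
      fun N => ⟨1, one_pos, fun h hh hle x hx => ?_⟩⟩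
    have hxL : x ∈ interior L := by
      rw [← hFG₀ x (hKU hx).1]
      exact hFL (mem_image_of_mem _ (interior_subset (hKU hx).2))
    rw [hFG h hh (hle.trans (min_le_left _ _)) x hxL, sub_self, norm_zero, one_mul]
    exact (pow_pos (hI hh) N).le
  · have hUL : closure Ut ∪ L ⊆ U := union_subset hUtU hLU
    have hev1 : ∀ᶠ h in 𝓝[I] 0, InjOn (Gh h) (closure Ut ∪ L) :=
      C1ConvergesAt.eventually_injOn_of_isCompact (hUtc.union hL) (fun x hx => hC1 x (hUL hx))
        (hdiff.injOn.mono hUL) fun x hx => hinv x (hUL hx)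
    have hev2 : ∀ᶠ h in 𝓝[I] 0, ∀ x ∈ closure Ut, (fderiv ℝ (Gh h) x).IsInvertible :=
      hUtc.eventually_forall_of_forall_prod_nhds
        (P := fun h x => (fderiv ℝ (Gh h) x).IsInvertible)
        fun x hx => (hC1 x (hUtU hx)).tendsto_fderiv.eventually
          (ContinuousLinearEquiv.isOpen.mem_nhds (hinv x (hUtU hx)))
    obtain ⟨δ', hδ', hall⟩ := exists_forall_le_of_eventually_nhdsWithin_zero hI (hev1.and hev2)
    have hUtU' : Ut ⊆ U := subset_closure.trans hUtU
    have hinj : ∀ h ∈ I, h ≤ min δ δ' → InjOn (Gh h) (closure Ut ∪ L) := fun h hh hle =>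
      (hall h hh (hle.trans (min_le_right _ _))).1
    have hHinv : ∀ h ∈ I, h ≤ min δ δ' → ∀ x ∈ Ut,
        Function.invFunOn (Gh h) Ut (Gh h x) = x := fun h hh hle x hx =>
      ((hinj h hh hle).mono (subset_closure.trans subset_union_left)).leftInvOn_invFunOn hx
    refine ⟨min δ δ', lt_min hδ hδ', fun h => Function.invFunOn (Gh h) Ut, fun h hh hle => ?_,
      fun K hKV hK N => ⟨1, one_pos, ?_⟩⟩
    · have hs := (hexp.1 h hh).mono hUtU'
      have hi : ∀ x ∈ Ut, (fderiv ℝ (Gh h) x).IsInvertible := fun x hx =>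
        (hall h hh (hle.trans (min_le_right _ _))).2 x (subset_closure hx)
      exact ⟨(hinj h hh hle).mono (subset_closure.trans subset_union_left),
        hs.isOpen_image_of_isInvertible hUt hi,
        hs.contDiffOn_left_inverse hUt hi (hHinv h hh hle), hHinv h hh hle⟩
    · rintro h hh hle _ ⟨hxK, x, hx, rfl⟩
      obtain ⟨hL', hG'⟩ := hGF h hh (hle.trans (min_le_left _ _)) _ (hKV hxK)
      have : Fh h (Gh h x) = x := hinj h hh hle (Or.inr (interior_subset hL'))
        (Or.inl (subset_closure hx)) hG'
      beta_reduce
      rw [hHinv h hh hle x hx, this, sub_self, norm_zero, one_mul]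
      exact (pow_pos (hI hh) N).le
end
end
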